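/- arXiv:1406.3948 — 9 statements merged into one kernel-verified Lean document; each statement's English description precedes it below -/
import Mathlib

section
/- Fix d ≥ 1 and write ℝ^d for EuclideanSpace ℝ (Fin d). Fix α ∈ (0,1). Asymptotic statements O(ν), o(ν) refer to the limit ν → 0⁺ (filter 𝓝[>] 0), with all bounds uniform in the spatial variable x. Let f : ℝ^d → ℝ^d be C², let w_L : [0,1] → ℝ^d be C¹, and for each ν > 0 let v_{L,ν} : [0,1] → ℝ^d be C¹ and β_ν ∈ (α,1), such that: (i) sup_{x∈[0,β_ν]} |v_{L,ν}(x) − w_L(x)| = O(ν); (ii) β_ν − α = O(ν); (iii) sup_{x∈[α,β_ν]} |(f∘v_{L,ν})'(x) − (f∘w_L)'(x)| → 0 as ν → 0⁺; (iv) all values w_L(x), v_{L,ν}(x) lie in a fixed compact set independent of ν. Then f(v_{L,ν}(β_ν)) − f(w_L(α)) − Df(w_L(α))·(v_{L,ν}(α) − w_L(α)) − (β_ν − α)·(f∘w_L)'(α) = o(ν), where Df(w_L(α)) denotes the Fréchet derivative of f at w_L(α). -/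
open Set Filter Asymptotics
open scoped Topology

/-- One-sided Taylor expansion of the flux of the perturbed solution at the
perturbed shock location: `f(v_ν(β_ν)) = f(w_L(α)) + Df(w_L(α))(v_ν(α) - w_L(α))
+ (β_ν - α)·(f∘w_L)'(α) + o(ν)` as `ν → 0⁺`. -/
theorem flux_expansion_at_perturbed_shock
    (d : ℕ) (hd : 1 ≤ d) (α : ℝ) (hα : α ∈ Ioo (0:ℝ) 1)
    (f : EuclideanSpace ℝ (Fin d) → EuclideanSpace ℝ (Fin d))
    (hf : ContDiff ℝ 2 f)
    (wL : ℝ → EuclideanSpace ℝ (Fin d))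
    (hwL : ContDiffOn ℝ 1 wL (Icc 0 1))
    (v : ℝ → ℝ → EuclideanSpace ℝ (Fin d)) (β : ℝ → ℝ)
    (hv : ∀ ν > (0:ℝ), ContDiffOn ℝ 1 (v ν) (Icc 0 1))
    (hβ : ∀ ν > (0:ℝ), β ν ∈ Ioo α 1)
    -- (i) uniform closeness of order ν on [0, β_ν]
    (hi : ∃ C : ℝ, ∀ᶠ ν in 𝓝[>] (0:ℝ), ∀ x ∈ Icc (0:ℝ) (β ν),
      ‖v ν x - wL x‖ ≤ C * ν)
    -- (ii) β_ν - α = O(ν)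
    (hii : ∃ C : ℝ, ∀ᶠ ν in 𝓝[>] (0:ℝ), β ν - α ≤ C * ν)
    -- (iii) uniform convergence of the derivatives of f∘v to those of f∘w on [α, β_ν]
    (hiii : ∀ ε > (0:ℝ), ∀ᶠ ν in 𝓝[>] (0:ℝ), ∀ x ∈ Icc α (β ν),
      ‖deriv (f ∘ v ν) x - deriv (f ∘ wL) x‖ ≤ ε)
    -- (iv) all values in a fixed compact set
    (K : Set (EuclideanSpace ℝ (Fin d))) (hK : IsCompact K)
    (hwK : ∀ x ∈ Icc (0:ℝ) 1, wL x ∈ K)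
    (hvK : ∀ ν > (0:ℝ), ∀ x ∈ Icc (0:ℝ) 1, v ν x ∈ K) :
    (fun ν => f (v ν (β ν)) - f (wL α) - fderiv ℝ f (wL α) (v ν α - wL α)
      - (β ν - α) • deriv (f ∘ wL) α) =o[𝓝[>] (0:ℝ)] (fun ν => ν) := by
  have hνpos : ∀ᶠ ν in 𝓝[>] (0:ℝ), 0 < ν := eventually_mem_nhdsWithin
  have hid : Tendsto (fun ν : ℝ => ν) (𝓝[>] (0:ℝ)) (𝓝 0) := tendsto_nhdsWithin_of_tendsto_nhds tendsto_id
  have hβO : (fun ν => β ν - α) =O[𝓝[>] (0:ℝ)] (fun ν => ν) := by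
    obtain ⟨C, hC⟩ := hii
    refine IsBigO.of_bound C ?_
    filter_upwards [hC, hνpos] with ν h1 h2
    rw [Real.norm_of_nonneg (by linarith [(hβ ν h2).1]), Real.norm_of_nonneg h2.le]
    exact h1
  have hvO : (fun ν => v ν α - wL α) =O[𝓝[>] (0:ℝ)] (fun ν => ν) := by
    obtain ⟨C, hC⟩ := hi
    refine IsBigO.of_bound C ?_
    filter_upwards [hC, hνpos] with ν h1 h2
    rw [Real.norm_of_nonneg h2.le]
    exact h1 α ⟨hα.1.le, (hβ ν h2).1.le⟩
  have hβt : Tendsto β (𝓝[>] (0:ℝ)) (𝓝 α) := by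
    have := (hβO.trans_tendsto hid).add_const α
    simpa using this
  have hvt : Tendsto (fun ν => v ν α) (𝓝[>] (0:ℝ)) (𝓝 (wL α)) := by
    have := (hvO.trans_tendsto hid).add_const (wL α)
    simpa using this
  have hfd : Differentiable ℝ f := hf.differentiable (by norm_num)
  have hterm2 : (fun ν => f (v ν α) - f (wL α) - fderiv ℝ f (wL α) (v ν α - wL α))
      =o[𝓝[>] (0:ℝ)] (fun ν => ν) :=
    (((hfd (wL α)).hasFDerivAt.isLittleO).comp_tendsto hvt).trans_isBigO hvO
  have hcd : ContinuousAt (deriv (f ∘ wL)) α := by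
    have h1 : ContDiffOn ℝ 1 (f ∘ wL) (Ioo 0 1) :=
      (hf.of_le (by norm_num)).comp_contDiffOn (hwL.mono Ioo_subset_Icc_self)
    exact (h1.continuousOn_deriv_of_isOpen isOpen_Ioo le_rfl).continuousAt (isOpen_Ioo.mem_nhds hα)
  have hterm1 : (fun ν => f (v ν (β ν)) - f (v ν α) - (β ν - α) • deriv (f ∘ wL) α)
      =o[𝓝[>] (0:ℝ)] (fun ν => ν) := by
    refine IsLittleO.trans_isBigO (g := fun ν => β ν - α) ?_ hβO
    refine IsLittleO.of_bound fun ε hε => ?_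
    obtain ⟨δ, hδ, hδ'⟩ := Metric.continuousAt_iff.1 hcd (ε / 2) (by positivity)
    filter_upwards [hiii (ε / 2) (by positivity), hνpos, hβt (Metric.ball_mem_nhds α hδ)]
      with ν h1 h2 h3
    have hb := hβ ν h2
    have h3' : |β ν - α| < δ := h3
    rw [abs_of_pos (by linarith [hb.1])] at h3'
    have hder : ∀ x ∈ Icc α (β ν), HasDerivWithinAt
        (fun x => f (v ν x) - x • deriv (f ∘ wL) α)
        (deriv (f ∘ v ν) x - (1:ℝ) • deriv (f ∘ wL) α) (Icc α (β ν)) x := by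
      intro x hx
      have hxn : Icc (0:ℝ) 1 ∈ 𝓝 x :=
        Icc_mem_nhds (hα.1.trans_le hx.1) (hx.2.trans_lt hb.2)
      have hvx : DifferentiableAt ℝ (v ν) x :=
        ((hv ν h2).differentiableOn (by norm_num)).differentiableAt hxn
      have hfx : HasDerivAt (f ∘ v ν) (deriv (f ∘ v ν) x) x :=
        ((hfd (v ν x)).comp x hvx).hasDerivAt
      exact (hfx.sub ((hasDerivAt_id x).smul_const _)).hasDerivWithinAt
    have hbd : ∀ x ∈ Icc α (β ν), ‖deriv (f ∘ v ν) x - (1:ℝ) • deriv (f ∘ wL) α‖ ≤ ε := by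
      intro x hx
      have ha := h1 x hx
      have hc : dist x α < δ := by
        rw [Real.dist_eq, abs_of_nonneg (by linarith [hx.1])]
        linarith [hx.2]
      have hd' := hδ' hc
      rw [dist_eq_norm] at hd'
      have := norm_sub_le_norm_sub_add_norm_sub (deriv (f ∘ v ν) x) (deriv (f ∘ wL) x)
        (deriv (f ∘ wL) α)
      rw [one_smul]
      linarith
    have := (convex_Icc α (β ν)).norm_image_sub_le_of_norm_hasDerivWithin_le hder hbd
      (left_mem_Icc.2 hb.1.le) (right_mem_Icc.2 hb.1.le)
    have heq : f (v ν (β ν)) - f (v ν α) - (β ν - α) • deriv (f ∘ wL) α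
        = f (v ν (β ν)) - β ν • deriv (f ∘ wL) α - (f (v ν α) - α • deriv (f ∘ wL) α) := by
      rw [sub_smul]
      abel
    rw [heq]
    exact this
  refine (hterm1.add hterm2).congr_left fun ν => ?_
  abel
end

section
/- Fix d ≥ 1 and write ℝ^d for EuclideanSpace ℝ (Fin d). Fix α ∈ (0,1). Asymptotic statements O(ν), o(ν) refer to the limit ν → 0⁺ (filter 𝓝[>] 0), with all bounds uniform in the spatial variable x. Let f, S : ℝ^d → ℝ^d be C², let w_L, w_R : [0,1] → ℝ^d be C¹ satisfying the balance law (f∘w_L)'(x) + S(w_L(x)) = 0 on [0,α] and (f∘w_R)'(x) + S(w_R(x)) = 0 on [α,1]. For each ν > 0 let β_ν ∈ (α,1) and let v_{L,ν}, v_{R,ν} : [0,1] → ℝ^d be C¹ such that: (i) β_ν − α = O(ν); (ii) sup_{x∈[0,β_ν]} |v_{L,ν}(x) − w_L(x)| = O(ν) and sup_{x∈[β_ν,1]∪{α}} |v_{R,ν}(x) − w_R(x)| = O(ν); (iii) the residuals (f∘v_{L,ν})' + S(v_{L,ν}) on [0,β_ν] and (f∘v_{R,ν})' + S(v_{R,ν})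 on [β_ν,1] have sup-norms μ_ν with μ_ν → 0 as ν → 0⁺; (iv) all values of w_L, w_R, v_{L,ν}, v_{R,ν} lie in a fixed compact set independent of ν. Then, writing [f(v_ν)] := f(v_{R,ν}(β_ν)) − f(v_{L,ν}(β_ν)) and [f(w)] := f(w_R(α)) − f(w_L(α)), one has [f(v_ν)] = [f(w)] + ( Df(w_R(β_ν))·(v_{R,ν}(β_ν) − w_R(β_ν)) − Df(w_L(α))·(v_{L,ν}(α) − w_L(α)) ) + (β_ν − α)·( (f∘w_R)'(α) − (f∘w_L)'(α) ) + o(ν). -/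
open Set Filter Asymptotics
open scoped Topology

/-- Linearization of the Rankine–Hugoniot condition: the jump of `f(v_ν)` at the
perturbed shock location `β_ν` equals the jump of `f(w)` at `α`, plus the
linearized term `[f'(w)w̄]`, plus `(β_ν - α)·[d/dx f(w)]`, up to `o(ν)`. -/
theorem linearization_of_rankine_hugoniot
    (d : ℕ) (hd : 1 ≤ d) (α : ℝ) (hα : α ∈ Ioo (0:ℝ) 1)
    (f S : EuclideanSpace ℝ (Fin d) → EuclideanSpace ℝ (Fin d))
    (hf : ContDiff ℝ 2 f) (hS : ContDiff ℝ 2 S)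
    (wL wR : ℝ → EuclideanSpace ℝ (Fin d))
    (hwL : ContDiffOn ℝ 1 wL (Icc 0 1)) (hwR : ContDiffOn ℝ 1 wR (Icc 0 1))
    -- w solves the balance law piecewise
    (hbalL : ∀ x ∈ Icc (0:ℝ) α, deriv (f ∘ wL) x + S (wL x) = 0)
    (hbalR : ∀ x ∈ Icc α (1:ℝ), deriv (f ∘ wR) x + S (wR x) = 0)
    (β : ℝ → ℝ) (vL vR : ℝ → ℝ → EuclideanSpace ℝ (Fin d)) (μ : ℝ → ℝ)
    (hβ : ∀ ν > (0:ℝ), β ν ∈ Ioo α 1)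
    (hvL : ∀ ν > (0:ℝ), ContDiffOn ℝ 1 (vL ν) (Icc 0 1))
    (hvR : ∀ ν > (0:ℝ), ContDiffOn ℝ 1 (vR ν) (Icc 0 1))
    -- (i) β_ν - α = O(ν)
    (hi : ∃ C : ℝ, ∀ᶠ ν in 𝓝[>] (0:ℝ), β ν - α ≤ C * ν)
    -- (ii) uniform closeness of order ν
    (hiiL : ∃ C : ℝ, ∀ᶠ ν in 𝓝[>] (0:ℝ), ∀ x ∈ Icc (0:ℝ) (β ν),
      ‖vL ν x - wL x‖ ≤ C * ν)
    (hiiR : ∃ C : ℝ, ∀ᶠ ν in 𝓝[>] (0:ℝ), ∀ x ∈ Icc (β ν) 1 ∪ {α},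
      ‖vR ν x - wR x‖ ≤ C * ν)
    -- (iii) residuals of size μ_ν with μ_ν → 0
    (hresL : ∀ ν > (0:ℝ), ∀ x ∈ Icc (0:ℝ) (β ν),
      ‖deriv (f ∘ vL ν) x + S (vL ν x)‖ ≤ μ ν)
    (hresR : ∀ ν > (0:ℝ), ∀ x ∈ Icc (β ν) (1:ℝ),
      ‖deriv (f ∘ vR ν) x + S (vR ν x)‖ ≤ μ ν)
    (hμ : Tendsto μ (𝓝[>] (0:ℝ)) (𝓝 0))
    -- (iv) all values in a fixed compact set
    (K : Set (EuclideanSpace ℝ (Fin d))) (hK : IsCompact K)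
    (hwK : ∀ x ∈ Icc (0:ℝ) 1, wL x ∈ K ∧ wR x ∈ K)
    (hvK : ∀ ν > (0:ℝ), ∀ x ∈ Icc (0:ℝ) 1, vL ν x ∈ K ∧ vR ν x ∈ K) :
    (fun ν => (f (vR ν (β ν)) - f (vL ν (β ν))) - (f (wR α) - f (wL α))
      - (fderiv ℝ f (wR (β ν)) (vR ν (β ν) - wR (β ν))
          - fderiv ℝ f (wL α) (vL ν α - wL α))
      - (β ν - α) • (deriv (f ∘ wR) α - deriv (f ∘ wL) α))
      =o[𝓝[>] (0:ℝ)] (fun ν => ν) := by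
  obtain ⟨hα0, hα1⟩ := hα
  obtain ⟨C, hC⟩ := hi
  obtain ⟨CL, hCL⟩ := hiiL
  obtain ⟨CR, hCR⟩ := hiiR
  have hpos : ∀ᶠ ν in 𝓝[>] (0:ℝ), 0 < ν := eventually_mem_nhdsWithin
  have hid : Tendsto (fun ν : ℝ => ν) (𝓝[>] (0:ℝ)) (𝓝 0) := tendsto_nhdsWithin_of_tendsto_nhds tendsto_id
  have hfd : Differentiable ℝ f := hf.differentiable (by norm_num)
  have hstrict : ∀ p, HasStrictFDerivAt f (fderiv ℝ f p) p := fun p =>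
    hf.contDiffAt.hasStrictFDerivAt (by norm_num)
  have hdiff : ∀ (u : ℝ → EuclideanSpace ℝ (Fin d)), ContDiffOn ℝ 1 u (Icc 0 1) →
      ∀ x, 0 < x → x < 1 → DifferentiableAt ℝ u x := fun u hu x h0 h1 =>
    (hu.differentiableOn (by norm_num)).differentiableAt (Icc_mem_nhds h0 h1)
  -- β - α = O(ν)
  have hβO : (fun ν => β ν - α) =O[𝓝[>] (0:ℝ)] (fun ν => ν) := by
    refine IsBigO.of_bound C ?_
    filter_upwards [hC, hpos] with ν h h0
    rw [Real.norm_of_nonneg (by linarith [(hβ ν h0).1]), Real.norm_of_nonneg h0.le]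
    exact h
  have hβt : Tendsto β (𝓝[>] (0:ℝ)) (𝓝 α) := by
    have := (hβO.trans_tendsto hid).add_const α
    simpa using this
  have hwLc : ContinuousAt wL α := (hdiff wL hwL α hα0 hα1).continuousAt
  have hwRc : ContinuousAt wR α := (hdiff wR hwR α hα0 hα1).continuousAt
  -- right side, nonlinear term
  have hRO : (fun ν => vR ν (β ν) - wR (β ν)) =O[𝓝[>] (0:ℝ)] (fun ν => ν) := by
    refine IsBigO.of_bound CR ?_
    filter_upwards [hCR, hpos] with ν h h0
    rw [Real.norm_of_nonneg h0.le]
    exact h _ (Or.inl ⟨le_rfl, (hβ ν h0).2.le⟩)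
  have hLO : (fun ν => vL ν α - wL α) =O[𝓝[>] (0:ℝ)] (fun ν => ν) := by
    refine IsBigO.of_bound CL ?_
    filter_upwards [hCL, hpos] with ν h h0
    rw [Real.norm_of_nonneg h0.le]
    exact h _ ⟨hα0.le, (hβ ν h0).1.le⟩
  have hwRt : Tendsto (fun ν => wR (β ν)) (𝓝[>] (0:ℝ)) (𝓝 (wR α)) := hwRc.tendsto.comp hβt
  have hvRt : Tendsto (fun ν => vR ν (β ν)) (𝓝[>] (0:ℝ)) (𝓝 (wR α)) := by
    have := (hRO.trans_tendsto hid).add hwRt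
    simpa using this
  have hvLt : Tendsto (fun ν => vL ν α) (𝓝[>] (0:ℝ)) (𝓝 (wL α)) := by
    have := (hLO.trans_tendsto hid).add_const (wL α)
    simpa using this
  have R1 : (fun ν => f (vR ν (β ν)) - f (wR (β ν))
      - fderiv ℝ f (wR α) (vR ν (β ν) - wR (β ν))) =o[𝓝[>] (0:ℝ)] (fun ν => ν) :=
    ((hstrict (wR α)).isLittleO.comp_tendsto (hvRt.prodMk_nhds hwRt)).trans_isBigO hRO
  have R2 : (fun ν => (fderiv ℝ f (wR (β ν)) - fderiv ℝ f (wR α)) (vR ν (β ν) - wR (β ν)))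
      =o[𝓝[>] (0:ℝ)] (fun ν => ν) := by
    have hc : Tendsto (fun ν => fderiv ℝ f (wR (β ν)) - fderiv ℝ f (wR α)) (𝓝[>] (0:ℝ)) (𝓝 0) := by
      have := (((hf.continuous_fderiv (by norm_num)).tendsto (wR α)).comp hwRt).sub_const
        (fderiv ℝ f (wR α))
      simpa using this
    have h1 : (fun ν => ‖fderiv ℝ f (wR (β ν)) - fderiv ℝ f (wR α)‖ * ‖vR ν (β ν) - wR (β ν)‖)
      =o[𝓝[>] (0:ℝ)] (fun ν => (1:ℝ) * ν) :=
      ((isLittleO_one_iff ℝ).2 hc).norm_left.mul_isBigO hRO.norm_left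
    simp only [one_mul] at h1
    refine IsBigO.trans_isLittleO (IsBigO.of_bound 1 (Eventually.of_forall fun ν => ?_)) h1
    rw [one_mul, norm_mul, norm_norm, norm_norm]
    exact ContinuousLinearMap.le_opNorm _ _
  have R3 : (fun ν => f (wR (β ν)) - f (wR α) - (β ν - α) • deriv (f ∘ wR) α)
      =o[𝓝[>] (0:ℝ)] (fun ν => ν) := by
    have hd1 : HasDerivAt (f ∘ wR) (deriv (f ∘ wR) α) α :=
      ((hfd _).comp α (hdiff wR hwR α hα0 hα1)).hasDerivAt
    exact ((hasDerivAt_iff_isLittleO.1 hd1).comp_tendsto hβt).trans_isBigO hβO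
  have L1 : (fun ν => f (vL ν α) - f (wL α)
      - fderiv ℝ f (wL α) (vL ν α - wL α)) =o[𝓝[>] (0:ℝ)] (fun ν => ν) :=
    ((hasFDerivAt_iff_isLittleO.1 (hfd (wL α)).hasFDerivAt).comp_tendsto hvLt).trans_isBigO hLO
  have L2 : (fun ν => f (vL ν (β ν)) - f (vL ν α) - (β ν - α) • deriv (f ∘ wL) α)
      =o[𝓝[>] (0:ℝ)] (fun ν => ν) := by
    refine IsLittleO.trans_isBigO (isLittleO_iff.2 fun ε hε => ?_) hβO
    have hμε : ∀ᶠ ν in 𝓝[>] (0:ℝ), μ ν < ε / 2 := hμ.eventually (gt_mem_nhds (by positivity))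
    obtain ⟨δ, hδ, hSδ⟩ := Metric.continuousAt_iff.1 (hS.continuous.continuousAt (x := wL α))
      (ε / 2) (by positivity)
    obtain ⟨η, hη, hwη⟩ := Metric.continuousAt_iff.1 hwLc (δ / 2) (by positivity)
    have hCν : ∀ᶠ ν in 𝓝[>] (0:ℝ), CL * ν < δ / 2 := by
      have : Tendsto (fun ν => CL * ν) (𝓝[>] (0:ℝ)) (𝓝 0) := by simpa using hid.const_mul CL
      exact this.eventually (gt_mem_nhds (by positivity))
    have hβη : ∀ᶠ ν in 𝓝[>] (0:ℝ), β ν < α + η := hβt.eventually (gt_mem_nhds (by linarith))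
    filter_upwards [hμε, hCν, hβη, hCL, hpos] with ν h1 h2 h3 h4 h0
    obtain ⟨hb0, hb1⟩ := hβ ν h0
    have hda : ∀ x ∈ Icc α (β ν), DifferentiableAt ℝ (f ∘ vL ν) x := fun x hx =>
      (hfd _).comp x (hdiff _ (hvL ν h0) x (by linarith [hx.1]) (by linarith [hx.2]))
    have hder : ∀ x ∈ Icc α (β ν), HasDerivWithinAt
        (fun x => (f ∘ vL ν) x - x • deriv (f ∘ wL) α)
        (deriv (f ∘ vL ν) x - (1:ℝ) • deriv (f ∘ wL) α) (Icc α (β ν)) x := fun x hx =>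
      ((hda x hx).hasDerivAt.sub ((hasDerivAt_id x).smul_const _)).hasDerivWithinAt
    have key := Convex.norm_image_sub_le_of_norm_hasDerivWithin_le (C := ε) hder ?_
      (convex_Icc α (β ν)) (left_mem_Icc.2 hb0.le) (right_mem_Icc.2 hb0.le)
    · have e0 : f (vL ν (β ν)) - f (vL ν α) - (β ν - α) • deriv (f ∘ wL) α =
          ((f ∘ vL ν) (β ν) - β ν • deriv (f ∘ wL) α)
            - ((f ∘ vL ν) α - α • deriv (f ∘ wL) α) := by
        rw [sub_smul, Function.comp_apply, Function.comp_apply]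
        abel
      rw [e0]
      exact key
    · intro x hx
      have e1 := hbalL α ⟨hα0.le, le_rfl⟩
      have hx' : x ∈ Icc 0 (β ν) := ⟨by linarith [hx.1], hx.2⟩
      have e2 := hresL ν h0 x hx'
      have e3 : dist (wL x) (wL α) < δ / 2 := hwη (by
        rw [Real.dist_eq, abs_of_nonneg (by linarith [hx.1])]; linarith [hx.2])
      have e4 : dist (vL ν x) (wL x) ≤ CL * ν := by rw [dist_eq_norm]; exact h4 x hx'
      have e5 : dist (S (vL ν x)) (S (wL α)) < ε / 2 := hSδ (by
        linarith [dist_triangle (vL ν x) (wL x) (wL α)])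
      rw [dist_eq_norm] at e5
      have e6 : deriv (f ∘ vL ν) x - (1:ℝ) • deriv (f ∘ wL) α =
          (deriv (f ∘ vL ν) x + S (vL ν x)) - (S (vL ν x) - S (wL α)) := by
        rw [one_smul, eq_neg_of_add_eq_zero_left e1]; abel
      rw [e6]
      linarith [norm_sub_le (deriv (f ∘ vL ν) x + S (vL ν x)) (S (vL ν x) - S (wL α))]
  refine (((R1.sub R2).add R3).sub (L1.add L2)).congr_left fun ν => ?_
  simp only [_root_.sub_apply, smul_sub]
  abel
end

section
/- Fix d ≥ 1 and write ℝ^d for EuclideanSpace ℝ (Fin d). Fix α ∈ (0,1). Asymptotic statements O(ν), o(ν) refer to the limit ν → 0⁺ (filter 𝓝[>] 0), with all bounds uniform in the spatial variable x. Let f, S : ℝ^d → ℝ^d and p : ℝ^d → ℝ be C². Let w_L, w_R : [0,1] → ℝ^d be C¹ with: (f∘w_L)' + S(w_L) = 0 on [0,α], (f∘w_R)' + S(w_R) = 0 on [α,1], and the Rankine–Hugoniot condition f(w_R(α)) = f(w_L(α)). Let z : [0,1] → ℝ^d be Lipschitz-continuous, differentiable on [0,α) and on (α,1], satisfying the adjoint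 equation −(Df(w_L(x)))*·z'(x) + (DS(w_L(x)))*·z(x) = ∇p(w_L(x)) for x ∈ [0,α) and −(Df(w_R(x)))*·z'(x) + (DS(w_R(x)))*·z(x) = ∇p(w_R(x)) for x ∈ (α,1], where * denotes the adjoint with respect to the Euclidean inner product ⟪·,·⟫. For each ν > 0 let β_ν ∈ (α,1) and let v_{L,ν}, v_{R,ν} : [0,1] → ℝ^d be C¹ with: (i) β_ν − α = O(ν); (ii) sup_{x∈[0,β_ν]} |v_{L,ν}(x) − w_L(x)| = O(ν) and sup_{x∈[β_ν,1]∪{α}} |v_{R,ν}(x) − w_R(x)| = O(ν); (iii) the residuals r_{L,ν} := (f∘v_{L,ν})' + S(v_{L,ν}) on [0,β_ν] and r_{R,ν} := (f∘v_{R,ν})' + S(v_{R,ν}) on [β_ν,1] have sup-norms μ_ν with μ_ν → 0 as ν → 0⁺; (iv) v_{L,ν}(0) = w_L(0) and v_{R,ν}(1) = w_R(1); (v) all values of w_L, w_R, v_{L,ν}, v_{R,ν} lie in a fixed compact set independent of ν. Define J(v_ν) := ∫₀^{β_ν} p(v_{L,ν}) + ∫_{β_ν}^1 p(v_{R,ν})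 − ⟪z(α), f(v_{R,ν}(β_ν)) − f(v_{L,ν}(β_ν))⟫ and J(w) := ∫₀^α p(w_L) + ∫_α^1 p(w_R). Then J(v_ν) − J(w) = ( ∫₀^{β_ν} ⟪z(x), r_{L,ν}(x)⟫ dx + ∫_{β_ν}^1 ⟪z(x), r_{R,ν}(x)⟫ dx ) + (β_ν − α)·( −⟪z(α), (f∘w_R)'(α) − (f∘w_L)'(α)⟫ − ( p(w_R(α)) − p(w_L(α)) ) ) + o(ν). -/
open Set Filter Asymptotics intervalIntegral
open scoped Topology RealInnerProductSpace

/-- Mean value inequality compared with an integral. -/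
lemma aux_mean_value {a b ε : ℝ} (hab : a ≤ b) {G g h : ℝ → ℝ}
    (hG : ContinuousOn G (Icc a b)) (hg : ∀ x ∈ Ioo a b, HasDerivAt G (g x) x)
    (hh : ContinuousOn h (Icc a b)) (hgh : ∀ x ∈ Ioo a b, |g x - h x| ≤ ε) :
    |G b - G a - ∫ x in a..b, h x| ≤ ε * (b - a) := by
  rcases hab.eq_or_lt with rfl | hlt
  · simp
  have hint : IntervalIntegrable h MeasureTheory.volume a b :=
    hh.intervalIntegrable_of_Icc hab
  have hcont : ContinuousOn (fun x => G x - ∫ t in a..x, h t) (Icc a b) := by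
    refine hG.sub ?_
    have := intervalIntegral.continuousOn_primitive_interval' hint
      (left_mem_uIcc)
    rwa [uIcc_of_le hab] at this
  have hder : ∀ x ∈ Ioo a b, HasDerivAt (fun x => G x - ∫ t in a..x, h t) (g x - h x) x := by
    intro x hx
    refine (hg x hx).sub ?_
    refine intervalIntegral.integral_hasDerivAt_right ?_ ?_ ?_
    · exact (hh.mono (Icc_subset_Icc_right hx.2.le)).intervalIntegrable_of_Icc hx.1.le
    · exact (hh.mono Ioo_subset_Icc_self).stronglyMeasurableAtFilter isOpen_Ioo x hx
    · exact hh.continuousAt (Icc_mem_nhds hx.1 hx.2)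
  obtain ⟨c, hc, hs⟩ := exists_hasDerivAt_eq_slope _ _ hlt hcont hder
  have hpos : 0 < b - a := sub_pos.2 hlt
  have : G b - G a - ∫ x in a..b, h x = (g c - h c) * (b - a) := by
    rw [hs]; field_simp; simp; ring
  rw [this, abs_mul, abs_of_pos hpos]
  exact mul_le_mul_of_nonneg_right (hgh c hc) hpos.le

section General
variable {E F : Type*} [NormedAddCommGroup E] [InnerProductSpace ℝ E] [FiniteDimensional ℝ E]
  [NormedAddCommGroup F] [NormedSpace ℝ F]

/-- Lipschitz bound and quadratic Taylor bound on a compact set. -/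
lemma aux_taylor {f : E → F} (hf : ContDiff ℝ 2 f) {K : Set E} (hK : IsCompact K) :
    ∃ M : ℝ, 0 ≤ M ∧ (∀ x ∈ K, ∀ y ∈ K, ‖f y - f x‖ ≤ M * ‖y - x‖) ∧
      ∀ x ∈ K, ∀ y ∈ K, ‖f y - f x - fderiv ℝ f x (y - x)‖ ≤ M * ‖y - x‖ ^ 2 := by
  obtain ⟨R, hR⟩ := hK.isBounded.subset_closedBall (0 : E)
  have hcv : Convex ℝ (Metric.closedBall (0:E) R) := convex_closedBall _ _
  have hcp : IsCompact (Metric.closedBall (0:E) R) := isCompact_closedBall _ _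
  obtain ⟨M1, h1⟩ := (hf.contDiffOn (s := Metric.closedBall (0:E) R)).exists_lipschitzOnWith
    (by norm_num) hcv hcp
  have hf' : ContDiff ℝ 1 (fderiv ℝ f) := hf.fderiv_right (by norm_num)
  obtain ⟨M2, h2⟩ := (hf'.contDiffOn (s := Metric.closedBall (0:E) R)).exists_lipschitzOnWith
    (by norm_num) hcv hcp
  refine ⟨M1 + M2, by positivity, fun x hx y hy => ?_, fun x hx y hy => ?_⟩
  · have := h1.norm_sub_le (hR hy) (hR hx)
    have h3 : 0 ≤ (M2:ℝ) * ‖y - x‖ := by positivity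
    linarith
  · have key : ‖f y - f x - fderiv ℝ f x (y - x)‖ ≤ (M2 * ‖y - x‖) * ‖y - x‖ := by
      refine (convex_segment x y).norm_image_sub_le_of_norm_fderiv_le' (𝕜 := ℝ)
        (fun t _ => (hf.differentiable (by norm_num)) t) ?_ (left_mem_segment ℝ x y)
        (right_mem_segment ℝ x y)
      intro t ht
      have := h2.norm_sub_le (hcv.segment_subset (hR hx) (hR hy) ht) (hR hx)
      refine this.trans ?_
      have : ‖t - x‖ ≤ ‖y - x‖ := by
        obtain ⟨θ, hθ, rfl⟩ := (segment_eq_image' ℝ x y) ▸ ht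
        simp only [add_sub_cancel_left, norm_smul, Real.norm_eq_abs, abs_of_nonneg hθ.1]
        exact mul_le_of_le_one_left (norm_nonneg _) hθ.2
      gcongr
    have h3 : 0 ≤ (M1:ℝ) * ‖y - x‖ ^ 2 := by positivity
    nlinarith

lemma aux_deriv {f : E → E} (hf : ContDiff ℝ 2 f) {u : ℝ → E}
    (hu : ContDiffOn ℝ 1 u (Icc 0 1)) :
    ∃ D : ℝ → E, ContinuousOn D (Icc 0 1) ∧ (∀ x ∈ Ioo (0:ℝ) 1, HasDerivAt (f ∘ u) (D x) x) ∧
      (∀ x ∈ Ioo (0:ℝ) 1, deriv (f ∘ u) x = D x) := by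
  have h : ContDiffOn ℝ 1 (f ∘ u) (Icc 0 1) :=
    (hf.of_le (by norm_num)).comp_contDiffOn hu
  have key : ∀ x ∈ Ioo (0:ℝ) 1, HasDerivAt (f ∘ u) (derivWithin (f ∘ u) (Icc 0 1) x) x := by
    intro x hx
    exact ((h.differentiableOn (by norm_num)) x
      (Ioo_subset_Icc_self hx)).hasDerivWithinAt.hasDerivAt (Icc_mem_nhds hx.1 hx.2)
  exact ⟨derivWithin (f ∘ u) (Icc 0 1),
    h.continuousOn_derivWithin (uniqueDiffOn_Icc zero_lt_one) (by norm_num), key,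
    fun x hx => (key x hx).deriv⟩

lemma aux_cont_resid {f S : E → E} (hf : ContDiff ℝ 2 f) (hS : ContDiff ℝ 2 S) {z u : ℝ → E}
    (hz : ContinuousOn z (Icc 0 1)) (hu : ContDiffOn ℝ 1 u (Icc 0 1)) :
    ∃ h : ℝ → ℝ, ContinuousOn h (Icc 0 1) ∧
      ∀ x ∈ Ioo (0:ℝ) 1, ⟪z x, deriv (f ∘ u) x + S (u x)⟫ = h x := by
  obtain ⟨D, hD, -, hD2⟩ := aux_deriv hf hu
  refine ⟨fun x => ⟪z x, D x + S (u x)⟫, ?_, fun x hx => by rw [hD2 x hx]⟩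
  exact hz.inner (hD.add (hS.continuous.comp_continuousOn hu.continuousOn))

lemma aux_int_resid {f S : E → E} (hf : ContDiff ℝ 2 f) (hS : ContDiff ℝ 2 S) {z u : ℝ → E}
    (hz : ContinuousOn z (Icc 0 1)) (hu : ContDiffOn ℝ 1 u (Icc 0 1)) {a b : ℝ} (ha : 0 ≤ a)
    (hab : a ≤ b) (hb : b ≤ 1) :
    IntervalIntegrable (fun x => ⟪z x, deriv (f ∘ u) x + S (u x)⟫) MeasureTheory.volume a b := by
  obtain ⟨h, hh, he⟩ := aux_cont_resid hf hS hz hu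
  have h1 : IntervalIntegrable h MeasureTheory.volume a b :=
    (hh.mono (Icc_subset_Icc ha hb)).intervalIntegrable_of_Icc hab
  rw [intervalIntegrable_iff_integrableOn_Ioo_of_le hab] at h1 ⊢
  refine h1.congr_fun (fun x hx => ?_) measurableSet_Ioo
  exact (he x ⟨ha.trans_lt hx.1, hx.2.trans_le hb⟩).symm

/-- The representation formula on an interval where both functions are smooth. -/
lemma aux_region {f S : E → E} {p : E → ℝ} (hf : ContDiff ℝ 2 f) (hS : ContDiff ℝ 2 S)
    (hp : ContDiff ℝ 2 p) {v w z z' : ℝ → E} (hv : ContDiffOn ℝ 1 v (Icc 0 1))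
    (hw : ContDiffOn ℝ 1 w (Icc 0 1)) {L : NNReal} (hz : LipschitzOnWith L z (Icc 0 1))
    {a b M Z δ : ℝ} (ha : 0 ≤ a) (hab : a ≤ b) (hb : b ≤ 1) (hM : 0 ≤ M)
    (hbal : ∀ x ∈ Ioo a b, deriv (f ∘ w) x + S (w x) = 0)
    (hz' : ∀ x ∈ Ioo a b, HasDerivAt z (z' x) x)
    (hadj : ∀ x ∈ Ioo a b, -(ContinuousLinearMap.adjoint (fderiv ℝ f (w x))) (z' x)
        + (ContinuousLinearMap.adjoint (fderiv ℝ S (w x))) (z x) = gradient p (w x))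
    (hZ : ∀ x ∈ Icc (0:ℝ) 1, ‖z x‖ ≤ Z)
    {K : Set E} (hvK : ∀ x ∈ Icc (0:ℝ) 1, v x ∈ K) (hwK : ∀ x ∈ Icc (0:ℝ) 1, w x ∈ K)
    (hfT : ∀ x ∈ K, ∀ y ∈ K, ‖f y - f x - fderiv ℝ f x (y - x)‖ ≤ M * ‖y - x‖ ^ 2)
    (hST : ∀ x ∈ K, ∀ y ∈ K, ‖S y - S x - fderiv ℝ S x (y - x)‖ ≤ M * ‖y - x‖ ^ 2)
    (hpT : ∀ x ∈ K, ∀ y ∈ K, ‖p y - p x - fderiv ℝ p x (y - x)‖ ≤ M * ‖y - x‖ ^ 2)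
    (hδ : ∀ x ∈ Icc a b, ‖v x - w x‖ ≤ δ) :
    |(∫ x in a..b, p (v x)) - (∫ x in a..b, p (w x))
      - (∫ x in a..b, ⟪z x, deriv (f ∘ v) x + S (v x)⟫)
      + (⟪z b, f (v b) - f (w b)⟫ - ⟪z a, f (v a) - f (w a)⟫)|
      ≤ (L + 1 + Z) * M * δ ^ 2 := by
  have hsub : Icc a b ⊆ Icc 0 1 := Icc_subset_Icc ha hb
  have hZ0 : 0 ≤ Z := (norm_nonneg _).trans (hZ 0 (by simp))
  obtain ⟨Dv, hDv, hDv1, hDv2⟩ := aux_deriv hf hv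
  obtain ⟨Dw, hDw, hDw1, hDw2⟩ := aux_deriv hf hw
  have hzc := hz.continuousOn
  have cpv : ContinuousOn (fun x => p (v x)) (Icc a b) :=
    hp.continuous.comp_continuousOn (hv.continuousOn.mono hsub)
  have cpw : ContinuousOn (fun x => p (w x)) (Icc a b) :=
    hp.continuous.comp_continuousOn (hw.continuousOn.mono hsub)
  have cr : ContinuousOn (fun x => ⟪z x, Dv x + S (v x)⟫) (Icc a b) :=
    (hzc.inner (hDv.add (hS.continuous.comp_continuousOn hv.continuousOn))).mono hsub
  have hIr : (∫ x in a..b, ⟪z x, deriv (f ∘ v) x + S (v x)⟫)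
      = ∫ x in a..b, ⟪z x, Dv x + S (v x)⟫ := by
    refine intervalIntegral.integral_congr_Ioo_of_le hab fun x hx => ?_
    simp only [hDv2 x ⟨ha.trans_lt hx.1, hx.2.trans_le hb⟩]
  have main := aux_mean_value (G := fun x => ⟪z x, f (v x) - f (w x)⟫)
    (g := fun x => ⟪z x, Dv x - Dw x⟫ + ⟪z' x, f (v x) - f (w x)⟫)
    (h := fun x => -(p (v x) - p (w x) - ⟪z x, Dv x + S (v x)⟫))
    (ε := (L + 1 + Z) * M * δ ^ 2) hab
    ((hzc.inner ((hf.continuous.comp_continuousOn hv.continuousOn).sub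
      (hf.continuous.comp_continuousOn hw.continuousOn))).mono hsub) ?_ ?_ ?_
  · rw [intervalIntegral.integral_neg, intervalIntegral.integral_sub,
      intervalIntegral.integral_sub] at main
    · rw [hIr]
      have hle : (L + 1 + Z) * M * δ ^ 2 * (b - a) ≤ (L + 1 + Z) * M * δ ^ 2 :=
        mul_le_of_le_one_right (by positivity) (by linarith)
      refine le_trans (le_of_eq ?_) (main.trans hle)
      congr 1
      ring
    · exact cpv.intervalIntegrable_of_Icc hab
    · exact cpw.intervalIntegrable_of_Icc hab
    · exact (cpv.sub cpw).intervalIntegrable_of_Icc hab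
    · exact cr.intervalIntegrable_of_Icc hab
  · intro x hx
    have hx1 : x ∈ Ioo (0:ℝ) 1 := ⟨ha.trans_lt hx.1, hx.2.trans_le hb⟩
    exact (hz' x hx).inner ℝ ((hDv1 x hx1).sub (hDw1 x hx1))
  · exact ((cpv.sub cpw).sub cr).neg
  · intro x hx
    have hx1 : x ∈ Ioo (0:ℝ) 1 := ⟨ha.trans_lt hx.1, hx.2.trans_le hb⟩
    have hx2 : x ∈ Icc (0:ℝ) 1 := Ioo_subset_Icc_self hx1
    have hDw' : Dw x = - S (w x) := by
      rw [← hDw2 x hx1]; exact eq_neg_of_add_eq_zero_left (hbal x hx)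
    have hz'n : ‖z' x‖ ≤ L := (hz' x hx).le_of_lipschitzOn (Icc_mem_nhds hx1.1 hx1.2) hz
    have hgrad : fderiv ℝ p (w x) (v x - w x) =
        -⟪z' x, fderiv ℝ f (w x) (v x - w x)⟫ + ⟪z x, fderiv ℝ S (w x) (v x - w x)⟫ := by
      have h1 : fderiv ℝ p (w x) (v x - w x) = ⟪gradient p (w x), v x - w x⟫ := by
        rw [← toDual_gradient]; simp
      rw [h1, ← hadj x hx, inner_add_left, inner_neg_left,
        ContinuousLinearMap.adjoint_inner_left, ContinuousLinearMap.adjoint_inner_left]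
    have e : ⟪z x, Dv x - Dw x⟫ + ⟪z' x, f (v x) - f (w x)⟫
        - -(p (v x) - p (w x) - ⟪z x, Dv x + S (v x)⟫)
        = ⟪z' x, f (v x) - f (w x) - fderiv ℝ f (w x) (v x - w x)⟫
          + (p (v x) - p (w x) - fderiv ℝ p (w x) (v x - w x))
          - ⟪z x, S (v x) - S (w x) - fderiv ℝ S (w x) (v x - w x)⟫ := by
      rw [hgrad, hDw']
      simp only [inner_sub_right, inner_add_right, inner_neg_right]
      ring
    have hq : M * ‖v x - w x‖ ^ 2 ≤ M * δ ^ 2 := by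
      have := hδ x (Ioo_subset_Icc_self hx)
      gcongr
    have b1 : |⟪z' x, f (v x) - f (w x) - fderiv ℝ f (w x) (v x - w x)⟫| ≤ L * (M * δ ^ 2) :=
      (abs_real_inner_le_norm _ _).trans (mul_le_mul hz'n
        ((hfT _ (hwK x hx2) _ (hvK x hx2)).trans hq) (norm_nonneg _) L.2)
    have b2 : |p (v x) - p (w x) - fderiv ℝ p (w x) (v x - w x)| ≤ M * δ ^ 2 :=
      (hpT _ (hwK x hx2) _ (hvK x hx2)).trans hq
    have b3 : |⟪z x, S (v x) - S (w x) - fderiv ℝ S (w x) (v x - w x)⟫| ≤ Z * (M * δ ^ 2) :=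
      (abs_real_inner_le_norm _ _).trans (mul_le_mul (hZ x hx2)
        ((hST _ (hwK x hx2) _ (hvK x hx2)).trans hq) (norm_nonneg _) hZ0)
    rw [e]
    rw [abs_le] at b1 b2 b3 ⊢
    constructor <;> nlinarith [b1.1, b1.2, b2.1, b2.2, b3.1, b3.2]

/-- Increment of `f ∘ u` over a short interval inside `(0,1)`. -/
lemma aux_increment {f : E → E} (hf : ContDiff ℝ 2 f) {u : ℝ → E}
    (hu : ContDiffOn ℝ 1 u (Icc 0 1)) {a b ε : ℝ} (ha : 0 < a) (hab : a ≤ b) (hb : b < 1)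
    {q : E} (hq : ∀ x ∈ Icc a b, ‖deriv (f ∘ u) x - q‖ ≤ ε) :
    ‖f (u b) - f (u a) - (b - a) • q‖ ≤ ε * (b - a) := by
  obtain ⟨D, -, hD1, hD2⟩ := aux_deriv hf hu
  have h := norm_image_sub_le_of_norm_deriv_le_segment' (a := a) (b := b)
    (f := fun x => (f ∘ u) x - x • q)
    (f' := fun x => D x - (1:ℝ) • q) (C := ε) ?_ ?_ b (right_mem_Icc.2 hab)
  · refine le_trans (le_of_eq ?_) h
    congr 1
    simp only [Function.comp, sub_smul]
    abel
  · intro x hx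
    exact ((hD1 x ⟨ha.trans_le hx.1, hx.2.trans_lt hb⟩).sub
      ((hasDerivAt_id x).smul_const q)).hasDerivWithinAt
  · intro x hx
    rw [one_smul, ← hD2 x ⟨ha.trans_le hx.1, hx.2.trans hb⟩]
    exact hq x (Ico_subset_Icc_self hx)

/-- An integral over a short interval is close to length times a value. -/
lemma aux_int_const {h : ℝ → ℝ} {a b ε q : ℝ} (hab : a ≤ b) (hh : ContinuousOn h (Icc a b))
    (hq : ∀ x ∈ Icc a b, |h x - q| ≤ ε) :
    |(∫ x in a..b, h x) - (b - a) * q| ≤ ε * (b - a) := by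
  have h1 : (∫ x in a..b, h x) - (b - a) * q = ∫ x in a..b, (h x - q) := by
    rw [intervalIntegral.integral_sub (hh.intervalIntegrable_of_Icc hab) (by simp)]
    simp
  rw [h1, ← abs_of_nonneg (sub_nonneg.2 hab)]
  rw [← Real.norm_eq_abs (∫ x in a..b, (h x - q))]
  refine intervalIntegral.norm_integral_le_of_norm_le_const fun x hx => ?_
  rw [uIoc_of_le hab] at hx
  exact hq x (Ioc_subset_Icc_self hx)


set_option maxHeartbeats 1000000 in
/-- The quantitative version for one fixed approximation. -/
lemma aux_core {f S : E → E} {p : E → ℝ} (hf : ContDiff ℝ 2 f) (hS : ContDiff ℝ 2 S)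
    (hp : ContDiff ℝ 2 p) {vL vR wL wR z z' : ℝ → E}
    (hvL : ContDiffOn ℝ 1 vL (Icc 0 1)) (hvR : ContDiffOn ℝ 1 vR (Icc 0 1))
    (hwL : ContDiffOn ℝ 1 wL (Icc 0 1)) (hwR : ContDiffOn ℝ 1 wR (Icc 0 1))
    {α β : ℝ} (hα : α ∈ Ioo (0:ℝ) 1) (hβ : β ∈ Ioo α 1)
    (hbalL : ∀ x ∈ Icc (0:ℝ) α, deriv (f ∘ wL) x + S (wL x) = 0)
    (hbalR : ∀ x ∈ Icc α (1:ℝ), deriv (f ∘ wR) x + S (wR x) = 0)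
    (hRH : f (wR α) = f (wL α))
    {L : NNReal} (hz : LipschitzOnWith L z (Icc 0 1))
    (hz'L : ∀ x ∈ Ico (0:ℝ) α, HasDerivAt z (z' x) x)
    (hz'R : ∀ x ∈ Ioc α (1:ℝ), HasDerivAt z (z' x) x)
    (hadjL : ∀ x ∈ Ico (0:ℝ) α,
      -(ContinuousLinearMap.adjoint (fderiv ℝ f (wL x))) (z' x)
        + (ContinuousLinearMap.adjoint (fderiv ℝ S (wL x))) (z x)
        = gradient p (wL x))
    (hadjR : ∀ x ∈ Ioc α (1:ℝ),
      -(ContinuousLinearMap.adjoint (fderiv ℝ f (wR x))) (z' x)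
        + (ContinuousLinearMap.adjoint (fderiv ℝ S (wR x))) (z x)
        = gradient p (wR x))
    {M Z Λ δ μ : ℝ} (hM : 0 ≤ M) (hΛ : 0 ≤ Λ) (hδ0 : 0 ≤ δ)
    (hZ : ∀ x ∈ Icc (0:ℝ) 1, ‖z x‖ ≤ Z)
    (hΛL : ∀ x ∈ Icc (0:ℝ) 1, ‖wL x - wL α‖ ≤ Λ * |x - α|)
    (hΛR : ∀ x ∈ Icc (0:ℝ) 1, ‖wR x - wR α‖ ≤ Λ * |x - α|)
    {K : Set E} (hwK : ∀ x ∈ Icc (0:ℝ) 1, wL x ∈ K ∧ wR x ∈ K)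
    (hvK : ∀ x ∈ Icc (0:ℝ) 1, vL x ∈ K ∧ vR x ∈ K)
    (hfT : ∀ x ∈ K, ∀ y ∈ K, ‖f y - f x - fderiv ℝ f x (y - x)‖ ≤ M * ‖y - x‖ ^ 2)
    (hST : ∀ x ∈ K, ∀ y ∈ K, ‖S y - S x - fderiv ℝ S x (y - x)‖ ≤ M * ‖y - x‖ ^ 2)
    (hpT : ∀ x ∈ K, ∀ y ∈ K, ‖p y - p x - fderiv ℝ p x (y - x)‖ ≤ M * ‖y - x‖ ^ 2)
    (hfL : ∀ x ∈ K, ∀ y ∈ K, ‖f y - f x‖ ≤ M * ‖y - x‖)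
    (hSL : ∀ x ∈ K, ∀ y ∈ K, ‖S y - S x‖ ≤ M * ‖y - x‖)
    (hpL : ∀ x ∈ K, ∀ y ∈ K, ‖p y - p x‖ ≤ M * ‖y - x‖)
    (hη : β - α ≤ δ)
    (hiiL : ∀ x ∈ Icc (0:ℝ) β, ‖vL x - wL x‖ ≤ δ)
    (hiiR : ∀ x ∈ Icc β 1, ‖vR x - wR x‖ ≤ δ)
    (hresL : ∀ x ∈ Icc (0:ℝ) β, ‖deriv (f ∘ vL) x + S (vL x)‖ ≤ μ)
    (hb0 : vL 0 = wL 0) (hb1 : vR 1 = wR 1) :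
    |(((∫ x in (0:ℝ)..β, p (vL x)) + (∫ x in β..(1:ℝ), p (vR x))
          - ⟪z α, f (vR β) - f (vL β)⟫)
        - ((∫ x in (0:ℝ)..α, p (wL x)) + (∫ x in α..(1:ℝ), p (wR x))))
      - ((∫ x in (0:ℝ)..β, ⟪z x, deriv (f ∘ vL) x + S (vL x)⟫)
        + (∫ x in β..(1:ℝ), ⟪z x, deriv (f ∘ vR) x + S (vR x)⟫))
      - (β - α) * (-⟪z α, deriv (f ∘ wR) α - deriv (f ∘ wL) α⟫
          - (p (wR α) - p (wL α)))|
      ≤ (2 * ((L + 1 + Z) * M) + 2 * (M * (1 + Λ)) + 2 * (Z * (M * (1 + Λ))) + L * M) * δ ^ 2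
        + 2 * Z * μ * δ := by
  obtain ⟨hα0, hα1⟩ := hα
  obtain ⟨hαβ, hβ1⟩ := hβ
  have hβ0 : 0 < β := hα0.trans hαβ
  have hαm : α ∈ Icc (0:ℝ) 1 := ⟨hα0.le, hα1.le⟩
  have hβm : β ∈ Icc (0:ℝ) 1 := ⟨hβ0.le, hβ1.le⟩
  have hη0 : 0 ≤ β - α := by linarith
  have hZ0 : 0 ≤ Z := (norm_nonneg _).trans (hZ 0 (by simp))
  have hμ0 : 0 ≤ μ := (norm_nonneg _).trans (hresL 0 ⟨le_rfl, hβ0.le⟩)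
  have hsub : Icc α β ⊆ Icc 0 1 := Icc_subset_Icc hα0.le hβ1.le
  have hzc := hz.continuousOn
  have cont : ∀ {u : ℝ → E}, ContDiffOn ℝ 1 u (Icc 0 1) →
      ContinuousOn (fun x => p (u x)) (Icc 0 1) :=
    fun hu => hp.continuous.comp_continuousOn hu.continuousOn
  have ii : ∀ {u : ℝ → E}, ContDiffOn ℝ 1 u (Icc 0 1) → ∀ {a b : ℝ}, 0 ≤ a → a ≤ b → b ≤ 1 →
      IntervalIntegrable (fun x => p (u x)) MeasureTheory.volume a b :=
    fun hu a b ha hab hb => ((cont hu).mono (Icc_subset_Icc ha hb)).intervalIntegrable_of_Icc hab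
  -- the two smooth regions
  have X1 := aux_region hf hS hp hvL hwL hz le_rfl hα0.le hα1.le hM
    (fun x hx => hbalL x (Ioo_subset_Icc_self hx)) (fun x hx => hz'L x (Ioo_subset_Ico_self hx))
    (fun x hx => hadjL x (Ioo_subset_Ico_self hx)) hZ (fun x hx => (hvK x hx).1)
    (fun x hx => (hwK x hx).1) hfT hST hpT (δ := δ)
    (fun x hx => hiiL x ⟨hx.1, hx.2.trans hαβ.le⟩)
  have X2 := aux_region hf hS hp hvR hwR hz hβ0.le hβ1.le le_rfl hM
    (fun x hx => hbalR x ⟨hαβ.le.trans hx.1.le, hx.2.le⟩)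
    (fun x hx => hz'R x ⟨hαβ.trans hx.1, hx.2.le⟩)
    (fun x hx => hadjR x ⟨hαβ.trans hx.1, hx.2.le⟩) hZ (fun x hx => (hvK x hx).2)
    (fun x hx => (hwK x hx).2) hfT hST hpT (δ := δ) hiiR
  -- closeness to the values at the shock
  have habs : ∀ x ∈ Icc α β, Λ * |x - α| ≤ Λ * δ := fun x hx => by
    have : |x - α| ≤ δ := by rw [abs_of_nonneg (by linarith [hx.1])]; linarith [hx.2]
    gcongr
  have dL : ∀ x ∈ Icc α β, ‖vL x - wL α‖ ≤ (1 + Λ) * δ := fun x hx => by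
    have h1 := hiiL x ⟨hα0.le.trans hx.1, hx.2⟩
    have h2 := (hΛL x (hsub hx)).trans (habs x hx)
    have h3 := norm_add_le (vL x - wL x) (wL x - wL α)
    rw [sub_add_sub_cancel] at h3
    linarith
  have dR : ∀ x ∈ Icc α β, ‖wR x - wR α‖ ≤ (1 + Λ) * δ := fun x hx => by
    have h2 := (hΛR x (hsub hx)).trans (habs x hx)
    linarith
  have hbd : ∀ {ε t : ℝ}, t ≤ ε * (β - α) → 0 ≤ ε → t ≤ ε * δ := fun h hε =>
    h.trans (mul_le_mul_of_nonneg_left hη hε)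
  have X3 : |(∫ x in α..β, p (vL x)) - (β - α) * p (wL α)| ≤ M * ((1 + Λ) * δ) * δ := by
    refine hbd (aux_int_const hαβ.le ((cont hvL).mono hsub) fun x hx => ?_) (by positivity)
    exact (hpL _ (hwK α hαm).1 _ (hvK x (hsub hx)).1).trans
      (mul_le_mul_of_nonneg_left (dL x hx) hM)
  have X4 : |(∫ x in α..β, p (wR x)) - (β - α) * p (wR α)| ≤ M * ((1 + Λ) * δ) * δ := by
    refine hbd (aux_int_const hαβ.le ((cont hwR).mono hsub) fun x hx => ?_) (by positivity)
    exact (hpL _ (hwK α hαm).2 _ (hwK x (hsub hx)).2).trans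
      (mul_le_mul_of_nonneg_left (dR x hx) hM)
  have X5 : |∫ x in α..β, ⟪z x, deriv (f ∘ vL) x + S (vL x)⟫| ≤ (Z * μ) * δ := by
    refine hbd ?_ (by positivity)
    have := intervalIntegral.norm_integral_le_of_norm_le_const (a := α) (b := β) (C := Z * μ)
      (f := fun x => ⟪z x, deriv (f ∘ vL) x + S (vL x)⟫) fun x hx => by
        rw [uIoc_of_le hαβ.le] at hx
        have hx' := Ioc_subset_Icc_self hx
        exact (norm_inner_le_norm _ _).trans (mul_le_mul (hZ x (hsub hx'))
          (hresL x ⟨hα0.le.trans hx'.1, hx'.2⟩) (norm_nonneg _) hZ0)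
    rwa [abs_of_nonneg hη0] at this
  have hzin : ∀ {y : E} {t : ℝ}, ‖y‖ ≤ t → |⟪z α, y⟫| ≤ Z * t := fun h =>
    (abs_real_inner_le_norm _ _).trans (mul_le_mul (hZ α hαm) h (norm_nonneg _) hZ0)
  have eL : deriv (f ∘ wL) α = - S (wL α) :=
    eq_neg_of_add_eq_zero_left (hbalL α ⟨hα0.le, le_rfl⟩)
  have eR : deriv (f ∘ wR) α = - S (wR α) :=
    eq_neg_of_add_eq_zero_left (hbalR α ⟨le_rfl, hα1.le⟩)
  have X6 : |⟪z α, f (vL β) - f (vL α) - (β - α) • deriv (f ∘ wL) α⟫|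
      ≤ Z * ((μ + M * ((1 + Λ) * δ)) * δ) := by
    refine hzin (hbd (aux_increment hf hvL hα0 hαβ.le hβ1 fun x hx => ?_) (by positivity))
    have h1 := hresL x ⟨hα0.le.trans hx.1, hx.2⟩
    have h2 := (hSL _ (hwK α hαm).1 _ (hvK x (hsub hx)).1).trans
      (mul_le_mul_of_nonneg_left (dL x hx) hM)
    have h3 : deriv (f ∘ vL) x - deriv (f ∘ wL) α
        = (deriv (f ∘ vL) x + S (vL x)) - (S (vL x) - S (wL α)) := by rw [eL]; abel
    rw [h3]
    exact (norm_sub_le _ _).trans (add_le_add h1 h2)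
  have X7 : |⟪z α, f (wR β) - f (wR α) - (β - α) • deriv (f ∘ wR) α⟫|
      ≤ Z * ((M * ((1 + Λ) * δ)) * δ) := by
    refine hzin (hbd (aux_increment hf hwR hα0 hαβ.le hβ1 fun x hx => ?_) (by positivity))
    have h2 := (hSL _ (hwK α hαm).2 _ (hwK x (hsub hx)).2).trans
      (mul_le_mul_of_nonneg_left (dR x hx) hM)
    have h3 : deriv (f ∘ wR) x - deriv (f ∘ wR) α = - (S (wR x) - S (wR α)) := by
      rw [eR, eq_neg_of_add_eq_zero_left (hbalR x ⟨hx.1, hx.2.trans hβ1.le⟩)]; abel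
    rw [h3, norm_neg]
    exact h2
  have X8 : |⟪z β - z α, f (vR β) - f (wR β)⟫| ≤ (L * δ) * (M * δ) := by
    refine (abs_real_inner_le_norm _ _).trans (mul_le_mul ?_ ?_ (norm_nonneg _) (by positivity))
    · refine (hz.norm_sub_le hβm hαm).trans ?_
      rw [Real.norm_eq_abs, abs_of_nonneg hη0]
      gcongr
    · exact (hfL _ (hwK β hβm).2 _ (hvK β hβm).2).trans
        (mul_le_mul_of_nonneg_left (hiiR β ⟨le_rfl, hβ1.le⟩) hM)
  -- splitting the integrals
  have s1 := intervalIntegral.integral_add_adjacent_intervals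
    (ii hvL le_rfl hα0.le hα1.le) (ii hvL hα0.le hαβ.le hβ1.le)
  have s2 := intervalIntegral.integral_add_adjacent_intervals
    (ii hwR hα0.le hαβ.le hβ1.le) (ii hwR hβ0.le hβ1.le le_rfl)
  have s3 := intervalIntegral.integral_add_adjacent_intervals
    (aux_int_resid hf hS hzc hvL le_rfl hα0.le hα1.le)
    (aux_int_resid hf hS hzc hvL hα0.le hαβ.le hβ1.le)
  rw [← s1, ← s2, ← s3]
  rw [hb0, sub_self, inner_zero_right] at X1
  rw [hb1, sub_self, inner_zero_right] at X2
  rw [hRH] at X7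
  simp only [inner_sub_right, inner_sub_left, inner_smul_right] at X1 X2 X6 X7 X8 ⊢
  rw [abs_le] at X1 X2 X3 X4 X5 X6 X7 X8 ⊢
  constructor <;> linarith [X1.1, X2.1, X3.1, X4.1, X5.1, X6.1, X7.1, X8.1,
    X1.2, X2.2, X3.2, X4.2, X5.2, X6.2, X7.2, X8.2]

end General

/-- Adjoint error representation with internal shock term (Theorem 1): for a
piecewise smooth exact solution `w` of the balance law with jump at `α`, a
Lipschitz adjoint solution `z`, and approximations `v_ν` with shock at `β_ν`
sufficiently close to `w` to order `ν` matching `w` at the boundary, the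
modified functional `J(u) = ∫ p(u) - ⟪z(α), [f(u)]⟫` satisfies
`J(v_ν) - J(w) = ∫ ⟪z, residual⟫ + (β_ν - α)·(-⟪z(α), [d/dx f(w)]⟫ - [p(w)]) + o(ν)`. -/
theorem adjoint_error_representation_with_shock_term
    (d : ℕ) (hd : 1 ≤ d) (α : ℝ) (hα : α ∈ Ioo (0:ℝ) 1)
    (f S : EuclideanSpace ℝ (Fin d) → EuclideanSpace ℝ (Fin d))
    (p : EuclideanSpace ℝ (Fin d) → ℝ)
    (hf : ContDiff ℝ 2 f) (hS : ContDiff ℝ 2 S) (hp : ContDiff ℝ 2 p)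
    (wL wR : ℝ → EuclideanSpace ℝ (Fin d))
    (hwL : ContDiffOn ℝ 1 wL (Icc 0 1)) (hwR : ContDiffOn ℝ 1 wR (Icc 0 1))
    -- w solves the balance law piecewise
    (hbalL : ∀ x ∈ Icc (0:ℝ) α, deriv (f ∘ wL) x + S (wL x) = 0)
    (hbalR : ∀ x ∈ Icc α (1:ℝ), deriv (f ∘ wR) x + S (wR x) = 0)
    -- Rankine–Hugoniot condition at α
    (hRH : f (wR α) = f (wL α))
    -- z is a Lipschitz adjoint solution, differentiable away from α
    (z z' : ℝ → EuclideanSpace ℝ (Fin d)) (L : NNReal)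
    (hzLip : LipschitzOnWith L z (Icc 0 1))
    (hz'L : ∀ x ∈ Ico (0:ℝ) α, HasDerivAt z (z' x) x)
    (hz'R : ∀ x ∈ Ioc α (1:ℝ), HasDerivAt z (z' x) x)
    (hadjL : ∀ x ∈ Ico (0:ℝ) α,
      -(ContinuousLinearMap.adjoint (fderiv ℝ f (wL x))) (z' x)
        + (ContinuousLinearMap.adjoint (fderiv ℝ S (wL x))) (z x)
        = gradient p (wL x))
    (hadjR : ∀ x ∈ Ioc α (1:ℝ),
      -(ContinuousLinearMap.adjoint (fderiv ℝ f (wR x))) (z' x)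
        + (ContinuousLinearMap.adjoint (fderiv ℝ S (wR x))) (z x)
        = gradient p (wR x))
    -- the family of approximations
    (β : ℝ → ℝ) (vL vR : ℝ → ℝ → EuclideanSpace ℝ (Fin d)) (μ : ℝ → ℝ)
    (hβ : ∀ ν > (0:ℝ), β ν ∈ Ioo α 1)
    (hvL : ∀ ν > (0:ℝ), ContDiffOn ℝ 1 (vL ν) (Icc 0 1))
    (hvR : ∀ ν > (0:ℝ), ContDiffOn ℝ 1 (vR ν) (Icc 0 1))
    -- (i) β_ν - α = O(ν)
    (hi : ∃ C : ℝ, ∀ᶠ ν in 𝓝[>] (0:ℝ), β ν - α ≤ C * ν)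
    -- (ii) uniform closeness of order ν
    (hiiL : ∃ C : ℝ, ∀ᶠ ν in 𝓝[>] (0:ℝ), ∀ x ∈ Icc (0:ℝ) (β ν),
      ‖vL ν x - wL x‖ ≤ C * ν)
    (hiiR : ∃ C : ℝ, ∀ᶠ ν in 𝓝[>] (0:ℝ), ∀ x ∈ Icc (β ν) 1 ∪ {α},
      ‖vR ν x - wR x‖ ≤ C * ν)
    -- (iii) residuals of size μ_ν with μ_ν → 0
    (hresL : ∀ ν > (0:ℝ), ∀ x ∈ Icc (0:ℝ) (β ν),
      ‖deriv (f ∘ vL ν) x + S (vL ν x)‖ ≤ μ ν)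
    (hresR : ∀ ν > (0:ℝ), ∀ x ∈ Icc (β ν) (1:ℝ),
      ‖deriv (f ∘ vR ν) x + S (vR ν x)‖ ≤ μ ν)
    (hμ : Tendsto μ (𝓝[>] (0:ℝ)) (𝓝 0))
    -- (iv) v matches w at the domain boundary
    (hbdry : ∀ ν > (0:ℝ), vL ν 0 = wL 0 ∧ vR ν 1 = wR 1)
    -- (v) all values in a fixed compact set
    (K : Set (EuclideanSpace ℝ (Fin d))) (hK : IsCompact K)
    (hwK : ∀ x ∈ Icc (0:ℝ) 1, wL x ∈ K ∧ wR x ∈ K)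
    (hvK : ∀ ν > (0:ℝ), ∀ x ∈ Icc (0:ℝ) 1, vL ν x ∈ K ∧ vR ν x ∈ K) :
    (fun ν =>
      -- J(v_ν) - J(w)
      (((∫ x in (0:ℝ)..(β ν), p (vL ν x)) + (∫ x in (β ν)..(1:ℝ), p (vR ν x))
          - ⟪z α, f (vR ν (β ν)) - f (vL ν (β ν))⟫)
        - ((∫ x in (0:ℝ)..α, p (wL x)) + (∫ x in α..(1:ℝ), p (wR x))))
      -- minus the adjoint-weighted residual
      - ((∫ x in (0:ℝ)..(β ν), ⟪z x, deriv (f ∘ vL ν) x + S (vL ν x)⟫)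
        + (∫ x in (β ν)..(1:ℝ), ⟪z x, deriv (f ∘ vR ν) x + S (vR ν x)⟫))
      -- minus the internal shock term
      - (β ν - α) * (-⟪z α, deriv (f ∘ wR) α - deriv (f ∘ wL) α⟫
          - (p (wR α) - p (wL α))))
      =o[𝓝[>] (0:ℝ)] (fun ν => ν) := by
  obtain ⟨M1, hM1, hfL, hfT⟩ := aux_taylor hf hK
  obtain ⟨M2, hM2, hSL, hST⟩ := aux_taylor hS hK
  obtain ⟨M3, hM3, hpL, hpT⟩ := aux_taylor hp hK
  obtain ⟨Z, hZ⟩ := isCompact_Icc.exists_bound_of_continuousOn hzLip.continuousOn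
  obtain ⟨Λ1, hΛ1⟩ := hwL.exists_lipschitzOnWith (by norm_num) (convex_Icc _ _) isCompact_Icc
  obtain ⟨Λ2, hΛ2⟩ := hwR.exists_lipschitzOnWith (by norm_num) (convex_Icc _ _) isCompact_Icc
  obtain ⟨C1, hC1⟩ := hi
  obtain ⟨C2, hC2⟩ := hiiL
  obtain ⟨C3, hC3⟩ := hiiR
  have hαm : α ∈ Icc (0:ℝ) 1 := Ioo_subset_Icc_self hα
  set M : ℝ := M1 + M2 + M3 with hMdef
  have hM : 0 ≤ M := by positivity
  set Λ : ℝ := (Λ1 : ℝ) + Λ2 with hΛdef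
  have hΛ : 0 ≤ Λ := by positivity
  set C : ℝ := |C1| + |C2| + |C3| with hCdef
  have hC : 0 ≤ C := by positivity
  have m1 : M1 ≤ M := by rw [hMdef]; linarith
  have m2 : M2 ≤ M := by rw [hMdef]; linarith
  have m3 : M3 ≤ M := by rw [hMdef]; linarith
  have c1 : C1 ≤ C := by
    rw [hCdef]; linarith [le_abs_self C1, abs_nonneg C2, abs_nonneg C3]
  have c2 : C2 ≤ C := by
    rw [hCdef]; linarith [le_abs_self C2, abs_nonneg C1, abs_nonneg C3]
  have c3 : C3 ≤ C := by
    rw [hCdef]; linarith [le_abs_self C3, abs_nonneg C2, abs_nonneg C1]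
  have l1 : (Λ1 : ℝ) ≤ Λ := by rw [hΛdef]; linarith [Λ2.2]
  have l2 : (Λ2 : ℝ) ≤ Λ := by rw [hΛdef]; linarith [Λ1.2]
  set B : ℝ := 2 * ((L + 1 + Z) * M) + 2 * (M * (1 + Λ)) + 2 * (Z * (M * (1 + Λ))) + L * M
    with hBdef
  have hφ : Tendsto (fun ν => B * C ^ 2 * ν + 2 * Z * C * μ ν) (𝓝[>] (0:ℝ)) (𝓝 0) := by
    have h1 : Tendsto (fun ν : ℝ => ν) (𝓝[>] (0:ℝ)) (𝓝 0) := nhdsWithin_le_nhds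
    simpa using (h1.const_mul (B * C ^ 2)).add (hμ.const_mul (2 * Z * C))
  have hlit : (fun ν : ℝ => ν * (B * C ^ 2 * ν + 2 * Z * C * μ ν)) =o[𝓝[>] (0:ℝ)]
      (fun ν => ν) := by
    simpa using (isBigO_refl (fun ν : ℝ => ν) (𝓝[>] (0:ℝ))).mul_isLittleO
      ((isLittleO_one_iff ℝ).2 hφ)
  refine IsBigO.trans_isLittleO (IsBigO.of_bound 1 ?_) hlit
  filter_upwards [hC1, hC2, hC3, self_mem_nhdsWithin] with ν h1 h2 h3 hν
  have hν0 : 0 < ν := hν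
  have key := aux_core hf hS hp (hvL ν hν) (hvR ν hν) hwL hwR hα (hβ ν hν) hbalL hbalR hRH
    hzLip hz'L hz'R hadjL hadjR (M := M) (Z := Z) (Λ := Λ) (δ := C * ν) (μ := μ ν) hM hΛ
    (by positivity) hZ
    (fun x hx => (hΛ1.norm_sub_le hx hαm).trans
      (mul_le_mul_of_nonneg_right l1 (norm_nonneg _)))
    (fun x hx => (hΛ2.norm_sub_le hx hαm).trans
      (mul_le_mul_of_nonneg_right l2 (norm_nonneg _)))
    hwK (hvK ν hν)
    (fun x hx y hy => (hfT x hx y hy).trans (mul_le_mul_of_nonneg_right m1 (by positivity)))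
    (fun x hx y hy => (hST x hx y hy).trans (mul_le_mul_of_nonneg_right m2 (by positivity)))
    (fun x hx y hy => (hpT x hx y hy).trans (mul_le_mul_of_nonneg_right m3 (by positivity)))
    (fun x hx y hy => (hfL x hx y hy).trans (mul_le_mul_of_nonneg_right m1 (by positivity)))
    (fun x hx y hy => (hSL x hx y hy).trans (mul_le_mul_of_nonneg_right m2 (by positivity)))
    (fun x hx y hy => (hpL x hx y hy).trans (mul_le_mul_of_nonneg_right m3 (by positivity)))
    (h1.trans (mul_le_mul_of_nonneg_right c1 hν0.le))
    (fun x hx => (h2 x hx).trans (mul_le_mul_of_nonneg_right c2 hν0.le))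
    (fun x hx => (h3 x (Or.inl hx)).trans (mul_le_mul_of_nonneg_right c3 hν0.le))
    (hresL ν hν) (hbdry ν hν).1 (hbdry ν hν).2
  rw [one_mul, Real.norm_eq_abs]
  refine key.trans (le_trans (le_of_eq ?_) (le_abs_self _))
  rw [← hBdef]
  ring
end

section
/- Under exactly the hypotheses of the adjoint error representation theorem (Theorem 1 of the paper: piecewise smooth exact solution w_L, w_R of the balance law with Rankine–Hugoniot condition at α, Lipschitz adjoint solution z of the adjoint equation, and a family of approximations v_{L,ν}, v_{R,ν} with shock at β_ν sufficiently close to w to order ν and matching w at the domain boundary), assume additionally that z fulfills the interior boundary condition ⟪z(α), (f∘w_R)'(α) − (f∘w_L)'(α)⟫ = −( p(w_R(α)) − p(w_L(α)) ). Then the usual adjoint error representation holds: J(v_ν) − J(w) = ∫₀^{β_ν} ⟪z(x), r_{L,ν}(x)⟫ dx + ∫_{β_ν}^1 ⟪z(x), r_{R,ν}(x)⟫ dx + o(ν) as ν → 0⁺, where r_{L,ν} := (f∘v_{L,ν})' + S(v_{L,ν}), r_{R,ν} := (f∘v_{R,ν})' + S(v_{R,ν}), J(v_ν) := ∫₀^{β_ν}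 p(v_{L,ν}) + ∫_{β_ν}^1 p(v_{R,ν}) − ⟪z(α), f(v_{R,ν}(β_ν)) − f(v_{L,ν}(β_ν))⟫, and J(w) := ∫₀^α p(w_L) + ∫_α^1 p(w_R). -/
open Set Filter Asymptotics intervalIntegral
open scoped Topology RealInnerProductSpace

lemma aux_taylor_s7 {E F : Type*} [NormedAddCommGroup E] [NormedSpace ℝ E]
    [NormedAddCommGroup F] [NormedSpace ℝ F] [ProperSpace E] {g : E → F} (hg : ContDiff ℝ 2 g)
    (R : ℝ) : ∃ C : ℝ, 0 ≤ C ∧ ∀ v ∈ Metric.closedBall (0:E) R, ∀ w ∈ Metric.closedBall (0:E) R,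
      ‖g v - g w - fderiv ℝ g w (v - w)‖ ≤ C * ‖v - w‖ ^ 2 ∧ ‖g v - g w‖ ≤ C * ‖v - w‖ := by
  have hc : Convex ℝ (Metric.closedBall (0:E) R) := convex_closedBall _ _
  have hk : IsCompact (Metric.closedBall (0:E) R) := isCompact_closedBall _ _
  have h1 : ContDiff ℝ 1 (fderiv ℝ g) := hg.fderiv_right (by norm_num)
  obtain ⟨K1, hK1⟩ := (h1.contDiffOn (s := Metric.closedBall (0:E) R)).exists_lipschitzOnWith
    one_ne_zero hc hk
  obtain ⟨K2, hK2⟩ := (hg.contDiffOn (s := Metric.closedBall (0:E) R)).exists_lipschitzOnWith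
    two_ne_zero hc hk
  refine ⟨K1 + K2, by positivity, fun v hv w hw => ⟨?_, ?_⟩⟩
  · have hseg : segment ℝ w v ⊆ Metric.closedBall (0:E) R := hc.segment_subset hw hv
    have := (convex_segment (𝕜 := ℝ) w v).norm_image_sub_le_of_norm_fderiv_le' (𝕜 := ℝ) (f := g)
      (φ := fderiv ℝ g w) (C := K1 * ‖v - w‖)
      (fun x _ => (hg.differentiable two_ne_zero) x)
      (fun x hx => by
        refine (hK1.norm_sub_le (hseg hx) hw).trans ?_
        have : ‖x - w‖ ≤ ‖v - w‖ := by
          have := norm_sub_le_of_mem_segment hx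
          exact this
        gcongr)
      (left_mem_segment ℝ w v) (right_mem_segment ℝ w v)
    refine this.trans ?_
    have h2 : (0:ℝ) ≤ K2 := K2.2
    nlinarith [mul_nonneg h2 (sq_nonneg ‖v - w‖)]
  · refine (hK2.norm_sub_le hv hw).trans ?_
    have h2 : (0:ℝ) ≤ K1 := K1.2
    nlinarith [mul_nonneg h2 (norm_nonneg (v - w))]

lemma aux_mvt {a b M : ℝ} (hab : a < b) (φ Φ Φ' : ℝ → ℝ)
    (hint : IntervalIntegrable φ MeasureTheory.volume a b) (hφ : ContinuousOn φ (Ioo a b))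
    (hΦ : ContinuousOn Φ (Icc a b)) (hd : ∀ x ∈ Ioo a b, HasDerivAt Φ (Φ' x) x)
    (hM : ∀ x ∈ Ioo a b, |φ x + Φ' x| ≤ M) :
    |(∫ x in a..b, φ x) + Φ b - Φ a| ≤ M * (b - a) := by
  have hcont : ContinuousOn (fun x => ∫ t in a..x, φ t) (Icc a b) := by
    have := intervalIntegral.continuousOn_primitive_interval (a := a) (b := b) (f := φ)
      (μ := MeasureTheory.volume)
      ((intervalIntegrable_iff' (by simp)).1 hint)
    rwa [uIcc_of_le hab.le] at this
  obtain ⟨c, hc, hceq⟩ := exists_hasDerivAt_eq_slope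
    (fun x => (∫ t in a..x, φ t) + Φ x) (fun x => φ x + Φ' x) hab (hcont.add hΦ) (by
      intro x hx
      refine HasDerivAt.add ?_ (hd x hx)
      refine intervalIntegral.integral_hasDerivAt_right ?_
        (hφ.stronglyMeasurableAtFilter isOpen_Ioo x hx) (hφ.continuousAt (isOpen_Ioo.mem_nhds hx))
      refine hint.mono_set ?_
      rw [uIcc_of_le hab.le, uIcc_of_le hx.1.le]
      exact Icc_subset_Icc le_rfl hx.2.le)
  have hpos : 0 < b - a := sub_pos.2 hab
  have := hM c hc
  rw [hceq, abs_div, abs_of_pos hpos, div_le_iff₀ hpos] at this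
  simpa [add_sub_assoc] using this

section
variable {d : ℕ} {f S : EuclideanSpace ℝ (Fin d) → EuclideanSpace ℝ (Fin d)}
  {p : EuclideanSpace ℝ (Fin d) → ℝ}

lemma aux_hasDeriv (hf : ContDiff ℝ 2 f) {v : ℝ → EuclideanSpace ℝ (Fin d)}
    (hv : ContDiffOn ℝ 1 v (Icc 0 1)) {x : ℝ} (hx : x ∈ Ioo (0:ℝ) 1) :
    HasDerivAt (fun x => f (v x)) (deriv (f ∘ v) x) x := by
  have h : ContDiffOn ℝ 1 (f ∘ v) (Icc 0 1) := (hf.of_le (by norm_num)).comp_contDiffOn hv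
  exact ((h.differentiableOn one_ne_zero).differentiableAt (Icc_mem_nhds hx.1 hx.2)).hasDerivAt

lemma aux_contDeriv (hf : ContDiff ℝ 2 f) {v : ℝ → EuclideanSpace ℝ (Fin d)}
    (hv : ContDiffOn ℝ 1 v (Icc 0 1)) : ContinuousOn (deriv (f ∘ v)) (Ioo 0 1) := by
  have h : ContDiffOn ℝ 1 (f ∘ v) (Icc 0 1) := (hf.of_le (by norm_num)).comp_contDiffOn hv
  exact (h.mono Ioo_subset_Icc_self).continuousOn_deriv_of_isOpen isOpen_Ioo le_rfl

lemma aux_integrable (hf : ContDiff ℝ 2 f) (hS : ContDiff ℝ 2 S)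
    {v : ℝ → EuclideanSpace ℝ (Fin d)}
    (hv : ContDiffOn ℝ 1 v (Icc 0 1)) {z : ℝ → EuclideanSpace ℝ (Fin d)}
    (hz : ContinuousOn z (Icc 0 1)) {a b : ℝ} (ha : 0 ≤ a) (hab : a ≤ b) (hb : b ≤ 1) :
    IntervalIntegrable (fun x => ⟪z x, deriv (f ∘ v) x + S (v x)⟫) MeasureTheory.volume a b := by
  have h : ContDiffOn ℝ 1 (f ∘ v) (Icc 0 1) := (hf.of_le (by norm_num)).comp_contDiffOn hv
  have h2 : ContinuousOn (fun x => ⟪z x, derivWithin (f ∘ v) (Icc 0 1) x + S (v x)⟫) (Icc 0 1) :=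
    hz.inner ((h.continuousOn_derivWithin (uniqueDiffOn_Icc one_pos) le_rfl).add
      (hS.continuous.comp_continuousOn hv.continuousOn))
  have h3 := (h2.mono (Icc_subset_Icc ha hb)).intervalIntegrable_of_Icc
    (μ := MeasureTheory.volume) hab
  refine h3.congr_uIoo ?_
  intro x hx
  rw [uIoo_of_le hab] at hx
  have : Icc (0:ℝ) 1 ∈ 𝓝 x := Icc_mem_nhds (ha.trans_lt hx.1) (hx.2.trans_le hb)
  simp only [derivWithin_of_mem_nhds this]

/-- One-sided error identity. -/
lemma aux_side (hf : ContDiff ℝ 2 f) (hS : ContDiff ℝ 2 S) (hp : ContDiff ℝ 2 p)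
    {v w z z' : ℝ → EuclideanSpace ℝ (Fin d)}
    (hv : ContDiffOn ℝ 1 v (Icc 0 1)) (hw : ContDiffOn ℝ 1 w (Icc 0 1))
    (hz : ContinuousOn z (Icc 0 1)) {a b : ℝ} (ha : 0 ≤ a) (hab : a < b) (hb : b ≤ 1)
    (hbal : ∀ x ∈ Ioo a b, deriv (f ∘ w) x + S (w x) = 0)
    (hz' : ∀ x ∈ Ioo a b, HasDerivAt z (z' x) x)
    (hadj : ∀ x ∈ Ioo a b,
      -(ContinuousLinearMap.adjoint (fderiv ℝ f (w x))) (z' x)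
        + (ContinuousLinearMap.adjoint (fderiv ℝ S (w x))) (z x)
        = gradient p (w x))
    {Cf CS Cp Lz Z ε : ℝ} (hCf0 : 0 ≤ Cf) (hCS0 : 0 ≤ CS) (hCp0 : 0 ≤ Cp)
    (hCf : ∀ x ∈ Ioo a b, ‖f (v x) - f (w x) - fderiv ℝ f (w x) (v x - w x)‖ ≤ Cf * ‖v x - w x‖ ^ 2)
    (hCS : ∀ x ∈ Ioo a b, ‖S (v x) - S (w x) - fderiv ℝ S (w x) (v x - w x)‖ ≤ CS * ‖v x - w x‖ ^ 2)
    (hCp : ∀ x ∈ Ioo a b, ‖p (v x) - p (w x) - fderiv ℝ p (w x) (v x - w x)‖ ≤ Cp * ‖v x - w x‖ ^ 2)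
    (hLz : ∀ x ∈ Ioo a b, ‖z' x‖ ≤ Lz) (hZ : ∀ x ∈ Ioo a b, ‖z x‖ ≤ Z)
    (hε : ∀ x ∈ Ioo a b, ‖v x - w x‖ ≤ ε) :
    |(∫ x in a..b, p (v x)) - (∫ x in a..b, p (w x))
      - (∫ x in a..b, ⟪z x, deriv (f ∘ v) x + S (v x)⟫)
      + ⟪z b, f (v b) - f (w b)⟫ - ⟪z a, f (v a) - f (w a)⟫|
      ≤ ((Cp + Z * CS + Lz * Cf) * ε ^ 2) * (b - a) := by
  have hsub : Icc a b ⊆ Icc 0 1 := Icc_subset_Icc ha hb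
  have hsub' : Ioo a b ⊆ Ioo 0 1 := Ioo_subset_Ioo ha hb
  have hpv : ContinuousOn (fun x => p (v x)) (Icc a b) :=
    hp.continuous.comp_continuousOn (hv.continuousOn.mono hsub)
  have hpw : ContinuousOn (fun x => p (w x)) (Icc a b) :=
    hp.continuous.comp_continuousOn (hw.continuousOn.mono hsub)
  have i1 := hpv.intervalIntegrable_of_Icc (μ := MeasureTheory.volume) hab.le
  have i2 := hpw.intervalIntegrable_of_Icc (μ := MeasureTheory.volume) hab.le
  have i3 := aux_integrable hf hS hv hz ha hab.le hb
  have hfv : ContinuousOn (fun x => f (v x)) (Icc a b) :=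
    hf.continuous.comp_continuousOn (hv.continuousOn.mono hsub)
  have hfw : ContinuousOn (fun x => f (w x)) (Icc a b) :=
    hf.continuous.comp_continuousOn (hw.continuousOn.mono hsub)
  have hSv : ContinuousOn (fun x => S (v x)) (Icc a b) :=
    hS.continuous.comp_continuousOn (hv.continuousOn.mono hsub)
  rw [← intervalIntegral.integral_sub i1 i2, ← intervalIntegral.integral_sub (i1.sub i2) i3]
  refine aux_mvt hab _ (fun x => ⟪z x, f (v x) - f (w x)⟫)
    (fun x => ⟪z x, deriv (f ∘ v) x - deriv (f ∘ w) x⟫ + ⟪z' x, f (v x) - f (w x)⟫)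
    ((i1.sub i2).sub i3) ?_ ((hz.mono hsub).inner (hfv.sub hfw)) ?_ ?_
  · exact ((hpv.sub hpw).mono Ioo_subset_Icc_self).sub
      ((hz.mono (Ioo_subset_Icc_self.trans hsub)).inner
        (((aux_contDeriv hf hv).mono hsub').add (hSv.mono Ioo_subset_Icc_self)))
  · intro x hx
    exact HasDerivAt.inner ℝ (hz' x hx)
      ((aux_hasDeriv hf hv (hsub' hx)).sub (aux_hasDeriv hf hw (hsub' hx)))
  · intro x hx
    have hb' : deriv (f ∘ w) x = - S (w x) := eq_neg_of_add_eq_zero_left (hbal x hx)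
    have hg := congrArg (fun y => ⟪y, v x - w x⟫) (hadj x hx)
    simp only [inner_add_left, inner_neg_left, ContinuousLinearMap.adjoint_inner_left,
      inner_gradient_left] at hg
    have key : p (v x) - p (w x) - ⟪z x, deriv (f ∘ v) x + S (v x)⟫ +
        (⟪z x, deriv (f ∘ v) x - deriv (f ∘ w) x⟫ + ⟪z' x, f (v x) - f (w x)⟫)
        = (p (v x) - p (w x) - fderiv ℝ p (w x) (v x - w x))
          - ⟪z x, S (v x) - S (w x) - fderiv ℝ S (w x) (v x - w x)⟫
          + ⟪z' x, f (v x) - f (w x) - fderiv ℝ f (w x) (v x - w x)⟫ := by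
      rw [hb', ← hg]
      simp only [inner_add_right, inner_sub_right, inner_neg_right]
      ring
    have hε' : ‖v x - w x‖ ^ 2 ≤ ε ^ 2 := by
      have := hε x hx
      gcongr
    have hZ0 : 0 ≤ Z := (norm_nonneg _).trans (hZ x hx)
    have hL0 : 0 ≤ Lz := (norm_nonneg _).trans (hLz x hx)
    have e1 : |p (v x) - p (w x) - fderiv ℝ p (w x) (v x - w x)| ≤ Cp * ε ^ 2 :=
      (hCp x hx).trans (by gcongr)
    have e2 : |⟪z x, S (v x) - S (w x) - fderiv ℝ S (w x) (v x - w x)⟫| ≤ Z * (CS * ε ^ 2) := by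
      refine (abs_real_inner_le_norm _ _).trans ?_
      exact mul_le_mul (hZ x hx) ((hCS x hx).trans (by gcongr)) (norm_nonneg _) hZ0
    have e3 : |⟪z' x, f (v x) - f (w x) - fderiv ℝ f (w x) (v x - w x)⟫| ≤ Lz * (Cf * ε ^ 2) := by
      refine (abs_real_inner_le_norm _ _).trans ?_
      exact mul_le_mul (hLz x hx) ((hCf x hx).trans (by gcongr)) (norm_nonneg _) hL0
    rw [key]
    rw [abs_le] at *
    constructor <;> nlinarith

/-- The contribution of the interval between the two shock positions. -/
lemma aux_mid (hf : ContDiff ℝ 2 f) (hS : ContDiff ℝ 2 S) (hp : ContDiff ℝ 2 p)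
    {v w z : ℝ → EuclideanSpace ℝ (Fin d)} {y : EuclideanSpace ℝ (Fin d)}
    (hv : ContDiffOn ℝ 1 v (Icc 0 1)) (hw : ContDiffOn ℝ 1 w (Icc 0 1))
    (hz : ContinuousOn z (Icc 0 1)) {a b : ℝ} (ha : 0 ≤ a) (hab : a < b) (hb : b ≤ 1)
    (hbal : ∀ x ∈ Ioo a b, deriv (f ∘ w) x + S (w x) = 0)
    (hibc : ⟪z a, S (w a) - S y⟫ = p (w a) - p y)
    {CS Cp Z m ε δ ζ : ℝ} (hCS0 : 0 ≤ CS) (hCp0 : 0 ≤ Cp)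
    (hCS : ∀ x ∈ Ioo a b, ‖S (v x) - S y‖ ≤ CS * ‖v x - y‖ ∧ ‖S (w x) - S (w a)‖ ≤ CS * ‖w x - w a‖)
    (hCp : ∀ x ∈ Ioo a b, ‖p (v x) - p y‖ ≤ Cp * ‖v x - y‖ ∧ ‖p (w x) - p (w a)‖ ≤ Cp * ‖w x - w a‖)
    (hZ : ‖z a‖ ≤ Z) (hzz : ∀ x ∈ Ioo a b, ‖z x - z a‖ ≤ ζ)
    (hres : ∀ x ∈ Ioo a b, ‖deriv (f ∘ v) x + S (v x)‖ ≤ m)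
    (hε : ∀ x ∈ Ioo a b, ‖v x - y‖ ≤ ε) (hδ : ∀ x ∈ Ioo a b, ‖w x - w a‖ ≤ δ) :
    |(∫ x in a..b, p (v x)) - (∫ x in a..b, p (w x))
      - (∫ x in a..b, ⟪z x, deriv (f ∘ v) x + S (v x)⟫)
      + ⟪z a, f (v b) - f (w b)⟫ - ⟪z a, f (v a) - f (w a)⟫|
      ≤ ((Cp + Z * CS) * (ε + δ) + ζ * m) * (b - a) := by
  have hsub : Icc a b ⊆ Icc 0 1 := Icc_subset_Icc ha hb
  have hsub' : Ioo a b ⊆ Ioo 0 1 := Ioo_subset_Ioo ha hb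
  have hpv : ContinuousOn (fun x => p (v x)) (Icc a b) :=
    hp.continuous.comp_continuousOn (hv.continuousOn.mono hsub)
  have hpw : ContinuousOn (fun x => p (w x)) (Icc a b) :=
    hp.continuous.comp_continuousOn (hw.continuousOn.mono hsub)
  have i1 := hpv.intervalIntegrable_of_Icc (μ := MeasureTheory.volume) hab.le
  have i2 := hpw.intervalIntegrable_of_Icc (μ := MeasureTheory.volume) hab.le
  have i3 := aux_integrable hf hS hv hz ha hab.le hb
  have hfv : ContinuousOn (fun x => f (v x)) (Icc a b) :=
    hf.continuous.comp_continuousOn (hv.continuousOn.mono hsub)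
  have hfw : ContinuousOn (fun x => f (w x)) (Icc a b) :=
    hf.continuous.comp_continuousOn (hw.continuousOn.mono hsub)
  have hSv : ContinuousOn (fun x => S (v x)) (Icc a b) :=
    hS.continuous.comp_continuousOn (hv.continuousOn.mono hsub)
  rw [← intervalIntegral.integral_sub i1 i2, ← intervalIntegral.integral_sub (i1.sub i2) i3]
  refine aux_mvt hab _ (fun x => ⟪z a, f (v x) - f (w x)⟫)
    (fun x => ⟪z a, deriv (f ∘ v) x - deriv (f ∘ w) x⟫ + ⟪(0 : EuclideanSpace ℝ (Fin d)), f (v x) - f (w x)⟫)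
    ((i1.sub i2).sub i3) ?_ (continuousOn_const.inner (hfv.sub hfw)) ?_ ?_
  · exact ((hpv.sub hpw).mono Ioo_subset_Icc_self).sub
      ((hz.mono (Ioo_subset_Icc_self.trans hsub)).inner
        (((aux_contDeriv hf hv).mono hsub').add (hSv.mono Ioo_subset_Icc_self)))
  · intro x hx
    exact HasDerivAt.inner ℝ (hasDerivAt_const x (z a))
      ((aux_hasDeriv hf hv (hsub' hx)).sub (aux_hasDeriv hf hw (hsub' hx)))
  · intro x hx
    have hb' : deriv (f ∘ w) x = - S (w x) := eq_neg_of_add_eq_zero_left (hbal x hx)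
    have key : p (v x) - p (w x) - ⟪z x, deriv (f ∘ v) x + S (v x)⟫ +
        (⟪z a, deriv (f ∘ v) x - deriv (f ∘ w) x⟫
          + ⟪(0 : EuclideanSpace ℝ (Fin d)), f (v x) - f (w x)⟫)
        = (p (v x) - p y) - (p (w x) - p (w a)) - ⟪z x - z a, deriv (f ∘ v) x + S (v x)⟫
          - ⟪z a, S (v x) - S y⟫ + ⟪z a, S (w x) - S (w a)⟫ := by
      rw [hb']
      simp only [inner_add_right, inner_sub_right, inner_sub_left, inner_neg_right,
        inner_zero_left] at hibc ⊢
      linarith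
    have hZ0 : 0 ≤ Z := (norm_nonneg _).trans hZ
    have hζ0 : 0 ≤ ζ := (norm_nonneg _).trans (hzz x hx)
    have hv' := hε x hx
    have hw' := hδ x hx
    have e1 : |p (v x) - p y| ≤ Cp * ε := (hCp x hx).1.trans (by gcongr)
    have e2 : |p (w x) - p (w a)| ≤ Cp * δ := (hCp x hx).2.trans (by gcongr)
    have e3 : |⟪z x - z a, deriv (f ∘ v) x + S (v x)⟫| ≤ ζ * m :=
      (abs_real_inner_le_norm _ _).trans
        (mul_le_mul (hzz x hx) (hres x hx) (norm_nonneg _) hζ0)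
    have e4 : |⟪z a, S (v x) - S y⟫| ≤ Z * (CS * ε) :=
      (abs_real_inner_le_norm _ _).trans
        (mul_le_mul hZ ((hCS x hx).1.trans (by gcongr)) (norm_nonneg _) hZ0)
    have e5 : |⟪z a, S (w x) - S (w a)⟫| ≤ Z * (CS * δ) :=
      (abs_real_inner_le_norm _ _).trans
        (mul_le_mul hZ ((hCS x hx).2.trans (by gcongr)) (norm_nonneg _) hZ0)
    rw [key]
    rw [abs_le] at *
    constructor <;> nlinarith
end

/-- Adjoint error representation with internal shock term (Theorem 1): for a
piecewise smooth exact solution `w` of the balance law with jump at `α`, a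
Lipschitz adjoint solution `z`, and approximations `v_ν` with shock at `β_ν`
sufficiently close to `w` to order `ν` matching `w` at the boundary, the
modified functional `J(u) = ∫ p(u) - ⟪z(α), [f(u)]⟫` satisfies the usual adjoint
error representation `J(v_ν) - J(w) = ∫ ⟪z, residual⟫ + o(ν)`, provided `z`
additionally fulfills the interior boundary condition
`⟪z(α), [f(w)_x]⟫ = -[p(w)]`. -/
theorem usual_adjoint_error_representation
    (d : ℕ) (hd : 1 ≤ d) (α : ℝ) (hα : α ∈ Ioo (0:ℝ) 1)
    (f S : EuclideanSpace ℝ (Fin d) → EuclideanSpace ℝ (Fin d))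
    (p : EuclideanSpace ℝ (Fin d) → ℝ)
    (hf : ContDiff ℝ 2 f) (hS : ContDiff ℝ 2 S) (hp : ContDiff ℝ 2 p)
    (wL wR : ℝ → EuclideanSpace ℝ (Fin d))
    (hwL : ContDiffOn ℝ 1 wL (Icc 0 1)) (hwR : ContDiffOn ℝ 1 wR (Icc 0 1))
    -- w solves the balance law piecewise
    (hbalL : ∀ x ∈ Icc (0:ℝ) α, deriv (f ∘ wL) x + S (wL x) = 0)
    (hbalR : ∀ x ∈ Icc α (1:ℝ), deriv (f ∘ wR) x + S (wR x) = 0)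
    -- Rankine–Hugoniot condition at α
    (hRH : f (wR α) = f (wL α))
    -- z is a Lipschitz adjoint solution, differentiable away from α
    (z z' : ℝ → EuclideanSpace ℝ (Fin d)) (L : NNReal)
    (hzLip : LipschitzOnWith L z (Icc 0 1))
    (hz'L : ∀ x ∈ Ico (0:ℝ) α, HasDerivAt z (z' x) x)
    (hz'R : ∀ x ∈ Ioc α (1:ℝ), HasDerivAt z (z' x) x)
    (hadjL : ∀ x ∈ Ico (0:ℝ) α,
      -(ContinuousLinearMap.adjoint (fderiv ℝ f (wL x))) (z' x)
        + (ContinuousLinearMap.adjoint (fderiv ℝ S (wL x))) (z x)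
        = gradient p (wL x))
    (hadjR : ∀ x ∈ Ioc α (1:ℝ),
      -(ContinuousLinearMap.adjoint (fderiv ℝ f (wR x))) (z' x)
        + (ContinuousLinearMap.adjoint (fderiv ℝ S (wR x))) (z x)
        = gradient p (wR x))
    -- the family of approximations
    (β : ℝ → ℝ) (vL vR : ℝ → ℝ → EuclideanSpace ℝ (Fin d)) (μ : ℝ → ℝ)
    (hβ : ∀ ν > (0:ℝ), β ν ∈ Ioo α 1)
    (hvL : ∀ ν > (0:ℝ), ContDiffOn ℝ 1 (vL ν) (Icc 0 1))
    (hvR : ∀ ν > (0:ℝ), ContDiffOn ℝ 1 (vR ν) (Icc 0 1))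
    -- (i) β_ν - α = O(ν)
    (hi : ∃ C : ℝ, ∀ᶠ ν in 𝓝[>] (0:ℝ), β ν - α ≤ C * ν)
    -- (ii) uniform closeness of order ν
    (hiiL : ∃ C : ℝ, ∀ᶠ ν in 𝓝[>] (0:ℝ), ∀ x ∈ Icc (0:ℝ) (β ν),
      ‖vL ν x - wL x‖ ≤ C * ν)
    (hiiR : ∃ C : ℝ, ∀ᶠ ν in 𝓝[>] (0:ℝ), ∀ x ∈ Icc (β ν) 1 ∪ {α},
      ‖vR ν x - wR x‖ ≤ C * ν)
    -- (iii) residuals of size μ_ν with μ_ν → 0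
    (hresL : ∀ ν > (0:ℝ), ∀ x ∈ Icc (0:ℝ) (β ν),
      ‖deriv (f ∘ vL ν) x + S (vL ν x)‖ ≤ μ ν)
    (hresR : ∀ ν > (0:ℝ), ∀ x ∈ Icc (β ν) (1:ℝ),
      ‖deriv (f ∘ vR ν) x + S (vR ν x)‖ ≤ μ ν)
    (hμ : Tendsto μ (𝓝[>] (0:ℝ)) (𝓝 0))
    -- (iv) v matches w at the domain boundary
    (hbdry : ∀ ν > (0:ℝ), vL ν 0 = wL 0 ∧ vR ν 1 = wR 1)
    -- (v) all values in a fixed compact set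
    (K : Set (EuclideanSpace ℝ (Fin d))) (hK : IsCompact K)
    (hwK : ∀ x ∈ Icc (0:ℝ) 1, wL x ∈ K ∧ wR x ∈ K)
    (hvK : ∀ ν > (0:ℝ), ∀ x ∈ Icc (0:ℝ) 1, vL ν x ∈ K ∧ vR ν x ∈ K)
    -- z fulfills the interior boundary condition
    (hibc : ⟪z α, deriv (f ∘ wR) α - deriv (f ∘ wL) α⟫
      = -(p (wR α) - p (wL α))) :
    (fun ν =>
      -- J(v_ν) - J(w)
      (((∫ x in (0:ℝ)..(β ν), p (vL ν x)) + (∫ x in (β ν)..(1:ℝ), p (vR ν x))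
          - ⟪z α, f (vR ν (β ν)) - f (vL ν (β ν))⟫)
        - ((∫ x in (0:ℝ)..α, p (wL x)) + (∫ x in α..(1:ℝ), p (wR x))))
      -- minus the adjoint-weighted residual
      - ((∫ x in (0:ℝ)..(β ν), ⟪z x, deriv (f ∘ vL ν) x + S (vL ν x)⟫)
        + (∫ x in (β ν)..(1:ℝ), ⟪z x, deriv (f ∘ vR ν) x + S (vR ν x)⟫)))
      =o[𝓝[>] (0:ℝ)] (fun ν => ν) := by
  obtain ⟨hα0, hα1⟩ := hα
  have hzc : ContinuousOn z (Icc 0 1) := hzLip.continuousOn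
  obtain ⟨R, hR⟩ := hK.isBounded.subset_closedBall (0 : EuclideanSpace ℝ (Fin d))
  obtain ⟨Cf, hCf0, hCf⟩ := aux_taylor_s7 hf R
  obtain ⟨CS, hCS0, hCS⟩ := aux_taylor_s7 hS R
  obtain ⟨Cp, hCp0, hCp⟩ := aux_taylor_s7 hp R
  obtain ⟨Z, hZ⟩ := isCompact_Icc.exists_bound_of_continuousOn hzc
  have hZ0 : 0 ≤ Z := (norm_nonneg _).trans (hZ α ⟨hα0.le, hα1.le⟩)
  obtain ⟨ML, hML⟩ := hwL.exists_lipschitzOnWith one_ne_zero (convex_Icc _ _) isCompact_Icc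
  obtain ⟨MR, hMR⟩ := hwR.exists_lipschitzOnWith one_ne_zero (convex_Icc _ _) isCompact_Icc
  have hz'bd : ∀ x ∈ Ioo (0:ℝ) 1, HasDerivAt z (z' x) x → ‖z' x‖ ≤ L := by
    intro x hx h
    have h1 := h.hasFDerivAt.le_of_lipschitzOn (Icc_mem_nhds hx.1 hx.2) hzLip
    simpa using h1
  obtain ⟨C1, hi⟩ := hi
  obtain ⟨C2, hiiL⟩ := hiiL
  obtain ⟨C3, hiiR⟩ := hiiR
  have hibc' : ⟪z α, S (wR α) - S (wL α)⟫ = p (wR α) - p (wL α) := by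
    have h1 : deriv (f ∘ wR) α = - S (wR α) :=
      eq_neg_of_add_eq_zero_left (hbalR α ⟨le_rfl, hα1.le⟩)
    have h2 : deriv (f ∘ wL) α = - S (wL α) :=
      eq_neg_of_add_eq_zero_left (hbalL α ⟨hα0.le, le_rfl⟩)
    rw [h1, h2] at hibc
    simp only [inner_sub_right, inner_neg_right] at hibc ⊢
    linarith
  set A : ℝ := (Cp + Z * CS + L * Cf) * C2 ^ 2 + (Cp + Z * CS + L * Cf) * C3 ^ 2
    + ((Cp + Z * CS) * (C2 + ML * C1 + MR * C1) + L * C1) * C1 + L * C1 * (Cf * C3) with hA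
  refine IsBigO.trans_isLittleO (g := fun ν : ℝ => ν ^ 2) ?_ ?_
  swap
  · have : (fun ν : ℝ => ν ^ 2) =o[𝓝 0] (fun ν : ℝ => ν) := by
      simpa using isLittleO_pow_id (𝕜 := ℝ) (n := 2) (by norm_num)
    exact this.mono nhdsWithin_le_nhds
  refine IsBigO.of_bound A ?_
  filter_upwards [hi, hiiL, hiiR, hμ.eventually (eventually_le_nhds zero_lt_one),
    self_mem_nhdsWithin] with ν hi hiiL hiiR hμ1 hν
  have hν : 0 < ν := hν
  obtain ⟨hβα, hβ1⟩ := hβ ν hν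
  have hβ0 : 0 < β ν := hα0.trans hβα
  have hαI : α ∈ Icc (0:ℝ) 1 := ⟨hα0.le, hα1.le⟩
  have hβI : β ν ∈ Icc (0:ℝ) 1 := ⟨hβ0.le, hβ1.le⟩
  have bL : ∀ x ∈ Icc (0:ℝ) 1, wL x ∈ Metric.closedBall 0 R := fun x hx => hR (hwK x hx).1
  have bR : ∀ x ∈ Icc (0:ℝ) 1, wR x ∈ Metric.closedBall 0 R := fun x hx => hR (hwK x hx).2
  have bvL : ∀ x ∈ Icc (0:ℝ) 1, vL ν x ∈ Metric.closedBall 0 R := fun x hx => hR (hvK ν hν x hx).1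
  have bvR : ∀ x ∈ Icc (0:ℝ) 1, vR ν x ∈ Metric.closedBall 0 R := fun x hx => hR (hvK ν hν x hx).2
  have I1 : ∀ x ∈ Ioo 0 α, x ∈ Icc (0:ℝ) 1 := fun x hx => ⟨hx.1.le, (hx.2.trans hα1).le⟩
  have I2 : ∀ x ∈ Ioo α (β ν), x ∈ Icc (0:ℝ) 1 :=
    fun x hx => ⟨(hα0.trans hx.1).le, (hx.2.trans hβ1).le⟩
  have I3 : ∀ x ∈ Ioo (β ν) 1, x ∈ Icc (0:ℝ) 1 := fun x hx => ⟨(hβ0.trans hx.1).le, hx.2.le⟩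
  have C1ν : 0 ≤ C1 * ν := (sub_nonneg.2 hβα.le).trans hi
  have sL := aux_side hf hS hp (hvL ν hν) hwL hzc (a := 0) (b := α) le_rfl hα0 hα1.le
    (fun x hx => hbalL x (Ioo_subset_Icc_self hx)) (fun x hx => hz'L x (Ioo_subset_Ico_self hx))
    (fun x hx => hadjL x (Ioo_subset_Ico_self hx)) hCf0 hCS0 hCp0
    (fun x hx => (hCf _ (bvL x (I1 x hx)) _ (bL x (I1 x hx))).1)
    (fun x hx => (hCS _ (bvL x (I1 x hx)) _ (bL x (I1 x hx))).1)
    (fun x hx => (hCp _ (bvL x (I1 x hx)) _ (bL x (I1 x hx))).1)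
    (fun x hx => hz'bd x ⟨hx.1, hx.2.trans hα1⟩ (hz'L x (Ioo_subset_Ico_self hx)))
    (fun x hx => hZ x (I1 x hx))
    (fun x hx => hiiL x ⟨hx.1.le, (hx.2.trans hβα).le⟩)
  have sR := aux_side hf hS hp (hvR ν hν) hwR hzc (a := β ν) (b := 1) hβ0.le hβ1 le_rfl
    (fun x hx => hbalR x ⟨(hβα.trans hx.1).le, hx.2.le⟩)
    (fun x hx => hz'R x ⟨hβα.trans hx.1, hx.2.le⟩)
    (fun x hx => hadjR x ⟨hβα.trans hx.1, hx.2.le⟩) hCf0 hCS0 hCp0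
    (fun x hx => (hCf _ (bvR x (I3 x hx)) _ (bR x (I3 x hx))).1)
    (fun x hx => (hCS _ (bvR x (I3 x hx)) _ (bR x (I3 x hx))).1)
    (fun x hx => (hCp _ (bvR x (I3 x hx)) _ (bR x (I3 x hx))).1)
    (fun x hx => hz'bd x ⟨hβ0.trans hx.1, hx.2⟩ (hz'R x ⟨hβα.trans hx.1, hx.2.le⟩))
    (fun x hx => hZ x (I3 x hx))
    (fun x hx => hiiR x (Or.inl (Ioo_subset_Icc_self hx)))
  have dist_le : ∀ x ∈ Icc α (β ν), ‖x - α‖ ≤ C1 * ν := by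
    intro x hx
    rw [Real.norm_eq_abs, abs_of_nonneg (sub_nonneg.2 hx.1)]
    linarith [hx.2]
  have lz : ∀ x ∈ Icc α (β ν), ‖z x - z α‖ ≤ L * (C1 * ν) := by
    intro x hx
    refine (hzLip.norm_sub_le ⟨hα0.le.trans hx.1, hx.2.trans hβ1.le⟩ hαI).trans ?_
    have := dist_le x hx
    gcongr
  have sM := aux_mid hf hS hp (y := wL α) (hvL ν hν) hwR hzc (a := α) (b := β ν) hα0.le hβα hβ1.le
    (fun x hx => hbalR x ⟨hx.1.le, (hx.2.trans hβ1).le⟩) hibc'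
    (m := 1) (Z := Z) (ζ := L * (C1 * ν)) (ε := C2 * ν + ML * (C1 * ν)) (δ := MR * (C1 * ν)) hCS0 hCp0
    (fun x hx => ⟨(hCS _ (bvL x (I2 x hx)) _ (bL α hαI)).2, (hCS _ (bR x (I2 x hx)) _ (bR α hαI)).2⟩)
    (fun x hx => ⟨(hCp _ (bvL x (I2 x hx)) _ (bL α hαI)).2, (hCp _ (bR x (I2 x hx)) _ (bR α hαI)).2⟩)
    (hZ α hαI) (fun x hx => lz x (Ioo_subset_Icc_self hx))
    (fun x hx => (hresL ν hν x ⟨(hα0.trans hx.1).le, hx.2.le⟩).trans hμ1)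
    (fun x hx => by
      have h1 := hiiL x ⟨(hα0.trans hx.1).le, hx.2.le⟩
      have h2 := hML.norm_sub_le (I2 x hx) hαI
      have h3 := dist_le x (Ioo_subset_Icc_self hx)
      have h4 : (ML:ℝ) * ‖x - α‖ ≤ ML * (C1 * ν) := by gcongr
      have h5 := norm_sub_le_norm_sub_add_norm_sub (vL ν x) (wL x) (wL α)
      linarith)
    (fun x hx => by
      have h2 := hMR.norm_sub_le (I2 x hx) hαI
      have h3 := dist_le x (Ioo_subset_Icc_self hx)
      have h4 : (MR:ℝ) * ‖x - α‖ ≤ MR * (C1 * ν) := by gcongr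
      linarith)
  have sB : |⟪z (β ν) - z α, f (vR ν (β ν)) - f (wR (β ν))⟫| ≤ L * (C1 * ν) * (Cf * (C3 * ν)) := by
    refine (abs_real_inner_le_norm _ _).trans ?_
    refine mul_le_mul (lz _ ⟨hβα.le, le_rfl⟩) ?_ (norm_nonneg _) (by positivity)
    refine (hCf _ (bvR _ hβI) _ (bR _ hβI)).2.trans ?_
    have := hiiR (β ν) (Or.inl ⟨le_rfl, hβ1.le⟩)
    gcongr
  -- splitting of the integrals
  have cI : ∀ (u : ℝ → EuclideanSpace ℝ (Fin d)), ContDiffOn ℝ 1 u (Icc 0 1) → ∀ a b : ℝ,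
      0 ≤ a → a ≤ b → b ≤ 1 → IntervalIntegrable (fun x => p (u x)) MeasureTheory.volume a b := by
    intro u hu a b ha hab hb
    exact (hp.continuous.comp_continuousOn
      (hu.continuousOn.mono (Icc_subset_Icc ha hb))).intervalIntegrable_of_Icc hab
  have q1 := intervalIntegral.integral_add_adjacent_intervals
    (cI _ (hvL ν hν) 0 α le_rfl hα0.le hα1.le) (cI _ (hvL ν hν) α (β ν) hα0.le hβα.le hβ1.le)
  have q2 := intervalIntegral.integral_add_adjacent_intervals
    (cI _ hwR α (β ν) hα0.le hβα.le hβ1.le) (cI _ hwR (β ν) 1 hβ0.le hβ1.le le_rfl)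
  have q3 := intervalIntegral.integral_add_adjacent_intervals
    (aux_integrable hf hS (hvL ν hν) hzc (a := 0) (b := α) le_rfl hα0.le hα1.le)
    (aux_integrable hf hS (hvL ν hν) hzc (a := α) (b := β ν) hα0.le hβα.le hβ1.le)
  obtain ⟨hb0, hb1⟩ := hbdry ν hν
  rw [hb0, sub_self, inner_zero_right] at sL
  rw [hb1, sub_self, inner_zero_right] at sR
  rw [hRH] at sM
  rw [← q1, ← q2, ← q3, Real.norm_eq_abs, Real.norm_eq_abs, abs_of_nonneg (sq_nonneg ν)]
  have tL : (Cp + Z * CS + L * Cf) * (C2 * ν) ^ 2 * (α - 0)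
      ≤ (Cp + Z * CS + L * Cf) * (C2 * ν) ^ 2 :=
    mul_le_of_le_one_right (by positivity) (by linarith)
  have tR : (Cp + Z * CS + L * Cf) * (C3 * ν) ^ 2 * (1 - β ν)
      ≤ (Cp + Z * CS + L * Cf) * (C3 * ν) ^ 2 :=
    mul_le_of_le_one_right (by positivity) (by linarith)
  have C2ν : 0 ≤ C2 * ν := (norm_nonneg _).trans (hiiL α ⟨hα0.le, hβα.le⟩)
  have tM : ((Cp + Z * CS) * (C2 * ν + ML * (C1 * ν) + MR * (C1 * ν)) + L * (C1 * ν) * 1)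
      * (β ν - α) ≤ ((Cp + Z * CS) * (C2 * ν + ML * (C1 * ν) + MR * (C1 * ν)) + L * (C1 * ν) * 1)
      * (C1 * ν) :=
    mul_le_mul_of_nonneg_left hi (by positivity)
  have hAν : A * ν ^ 2 = (Cp + Z * CS + L * Cf) * (C2 * ν) ^ 2
      + (Cp + Z * CS + L * Cf) * (C3 * ν) ^ 2
      + ((Cp + Z * CS) * (C2 * ν + ML * (C1 * ν) + MR * (C1 * ν)) + L * (C1 * ν) * 1) * (C1 * ν)
      + L * (C1 * ν) * (Cf * (C3 * ν)) := by
    rw [hA]; ring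
  rw [hAν]
  have sL' := abs_le.1 (sL.trans tL)
  have sR' := abs_le.1 (sR.trans tR)
  have sM' := abs_le.1 (sM.trans tM)
  have sB' := abs_le.1 sB
  clear sL sR sM sB
  simp only [inner_sub_left, inner_sub_right] at sL' sR' sM' sB' ⊢
  rw [abs_le]
  constructor <;> linarith [sL'.1, sL'.2, sR'.1, sR'.2, sM'.1, sM'.2, sB'.1, sB'.2]
end

section
/- Fix d ≥ 1 and write ℝ^d for EuclideanSpace ℝ (Fin d), with Euclidean inner product ⟪·,·⟫. Let ε > 0, let f, S : ℝ^d → ℝ^d be C¹, let p : ℝ^d → ℝ be C¹, and let w, z : ℝ → ℝ^d be twice differentiable at a point x ∈ ℝ, with f∘w differentiable at x, satisfying at x the viscous primal equation (f∘w)'(x) + S(w(x)) = ε·w''(x) and the viscous adjoint equation −(Df(w(x)))*·z'(x) + (DS(w(x)))*·z(x) = ε·z''(x) + ∇p(w(x)), where * denotes the adjoint with respect to ⟪·,·⟫ and Df, DS are the Fréchet derivatives. Then the function x ↦ p(w(x)) − ⟪z(x), S(w(x))⟫ is differentiable at x with derivative d/dx ( p(w(x)) − ⟪z(x), S(w(x))⟫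 ) = −ε · d/dx ⟪z'(x), w'(x)⟫. -/
open scoped RealInnerProductSpace

/-- Pointwise identity underlying Theorem 2: for solutions `w` of the viscous
balance law `(f∘w)' + S(w) = ε w''` and `z` of the viscous adjoint equation
`-(Df(w))* z' + (DS(w))* z = ε z'' + ∇p(w)`, the derivative of
`p(w) - ⟪z, S(w)⟫` equals `-ε · d/dx ⟪z', w'⟫` at `x`. -/
theorem viscous_interior_bc_pointwise_identity
    (d : ℕ) (hd : 1 ≤ d) (ε : ℝ) (hε : 0 < ε)
    (f S : EuclideanSpace ℝ (Fin d) → EuclideanSpace ℝ (Fin d))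
    (hf : ContDiff ℝ 1 f) (hS : ContDiff ℝ 1 S)
    (p : EuclideanSpace ℝ (Fin d) → ℝ) (hp : ContDiff ℝ 1 p)
    (w z w' z' : ℝ → EuclideanSpace ℝ (Fin d)) (x : ℝ)
    (wx'' zx'' : EuclideanSpace ℝ (Fin d))
    (hw' : ∀ᶠ t in nhds x, HasDerivAt w (w' t) t)
    (hz' : ∀ᶠ t in nhds x, HasDerivAt z (z' t) t)
    (hw'' : HasDerivAt w' wx'' x)
    (hz'' : HasDerivAt z' zx'' x)
    (hfw : DifferentiableAt ℝ (f ∘ w) x)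
    -- viscous primal equation at x
    (hprimal : deriv (f ∘ w) x + S (w x) = ε • wx'')
    -- viscous adjoint equation at x
    (hadj : -(ContinuousLinearMap.adjoint (fderiv ℝ f (w x))) (z' x)
        + (ContinuousLinearMap.adjoint (fderiv ℝ S (w x))) (z x)
        = ε • zx'' + gradient p (w x)) :
    HasDerivAt (fun t => p (w t) - ⟪z t, S (w t)⟫)
      (-ε * (⟪zx'', w' x⟫ + ⟪z' x, wx''⟫)) x := by
  have hw := hw'.self_of_nhds
  have hz := hz'.self_of_nhds
  have hfx := (hf.differentiable one_ne_zero (w x)).hasFDerivAt.comp_hasDerivAt x hw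
  have hSx := (hS.differentiable one_ne_zero (w x)).hasFDerivAt.comp_hasDerivAt x hw
  have hpx := (hp.differentiable one_ne_zero (w x)).hasGradientAt.hasFDerivAt.comp_hasDerivAt x hw
  have hmain := hpx.sub (hz.inner ℝ hSx)
  rw [hfx.deriv] at hprimal
  have h1 := congrArg (fun v => ⟪z' x, v⟫) hprimal
  have h2 := congrArg (fun v => ⟪v, w' x⟫) hadj
  simp only [inner_add_left, inner_add_right, inner_neg_left, real_inner_smul_left,
    real_inner_smul_right, ContinuousLinearMap.adjoint_inner_left] at h1 h2
  refine hmain.congr_deriv ?_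
  simp only [InnerProductSpace.toDual_apply_apply, Function.comp_apply]
  linarith
end

section
/- Fix d ≥ 1 and write ℝ^d for EuclideanSpace ℝ (Fin d), with Euclidean inner product ⟪·,·⟫. Let ε > 0, let f, S : ℝ^d → ℝ^d be C¹, let p : ℝ^d → ℝ be C¹, let a < b be reals, and let w, z : ℝ → ℝ^d be C² on [a,b] satisfying for all x ∈ [a,b] the viscous primal equation (f∘w)'(x) + S(w(x)) = ε·w''(x) and the viscous adjoint equation −(Df(w(x)))*·z'(x) + (DS(w(x)))*·z(x) = ε·z''(x) + ∇p(w(x)), where * denotes the adjoint with respect to ⟪·,·⟫. Then ( p(w(b)) − ⟪z(b), S(w(b))⟫ ) − ( p(w(a)) − ⟪z(a), S(w(a))⟫ ) = −ε·( ⟪z'(b), w'(b)⟫ − ⟪z'(a), w'(a)⟫ ). -/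
open Set
open scoped RealInnerProductSpace

/-- Exact identity from the proof of Theorem 2: across the transition region
`[a,b]`, `[p(w^ε)] - [⟪z^ε, S(w^ε)⟫] = -ε [⟪z^ε_x, w^ε_x⟫]_a^b` for viscous
primal and adjoint solutions. -/
theorem viscous_interior_bc_integrated_identity
    (d : ℕ) (hd : 1 ≤ d) (ε : ℝ) (hε : 0 < ε)
    (f S : EuclideanSpace ℝ (Fin d) → EuclideanSpace ℝ (Fin d))
    (hf : ContDiff ℝ 1 f) (hS : ContDiff ℝ 1 S)
    (p : EuclideanSpace ℝ (Fin d) → ℝ) (hp : ContDiff ℝ 1 p)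
    (a b : ℝ) (hab : a < b)
    (w z w' w'' z' z'' : ℝ → EuclideanSpace ℝ (Fin d))
    -- w and z are C² on [a,b]
    (hw' : ∀ x ∈ Icc a b, HasDerivAt w (w' x) x)
    (hw'' : ∀ x ∈ Icc a b, HasDerivAt w' (w'' x) x)
    (hz' : ∀ x ∈ Icc a b, HasDerivAt z (z' x) x)
    (hz'' : ∀ x ∈ Icc a b, HasDerivAt z' (z'' x) x)
    (hw''c : ContinuousOn w'' (Icc a b)) (hz''c : ContinuousOn z'' (Icc a b))
    -- viscous primal equation
    (hprimal : ∀ x ∈ Icc a b, deriv (f ∘ w) x + S (w x) = ε • w'' x)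
    -- viscous adjoint equation
    (hadj : ∀ x ∈ Icc a b,
      -(ContinuousLinearMap.adjoint (fderiv ℝ f (w x))) (z' x)
        + (ContinuousLinearMap.adjoint (fderiv ℝ S (w x))) (z x)
        = ε • z'' x + gradient p (w x)) :
    (p (w b) - ⟪z b, S (w b)⟫) - (p (w a) - ⟪z a, S (w a)⟫)
      = -ε * (⟪z' b, w' b⟫ - ⟪z' a, w' a⟫) := by
  have key : ∀ x ∈ Icc a b,
      HasDerivAt (fun x => p (w x) - ⟪z x, S (w x)⟫ + ε * ⟪z' x, w' x⟫) 0 x := by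
    intro x hx
    have hdf := (hf.differentiable one_ne_zero (w x)).hasFDerivAt.comp_hasDerivAt x (hw' x hx)
    have hdS := (hS.differentiable one_ne_zero (w x)).hasFDerivAt.comp_hasDerivAt x (hw' x hx)
    have hdp := (hp.differentiable one_ne_zero (w x)).hasGradientAt.hasFDerivAt.comp_hasDerivAt x
      (hw' x hx)
    have h1 := hprimal x hx
    rw [hdf.deriv] at h1
    have h2 := congrArg (fun v => ⟪z' x, v⟫) h1
    have h3 := congrArg (fun v => ⟪v, w' x⟫) (hadj x hx)
    simp only [inner_add_left, inner_add_right, inner_neg_left, real_inner_smul_left,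
      real_inner_smul_right, ContinuousLinearMap.adjoint_inner_left] at h2 h3
    have hG := (hdp.sub ((hz' x hx).inner ℝ hdS)).add
      (((hz'' x hx).inner ℝ (hw'' x hx)).const_mul ε)
    refine hG.congr_deriv ?_
    simp only [InnerProductSpace.toDual_apply_apply, Function.comp_apply]
    linarith
  have hc := constant_of_has_deriv_right_zero
    (fun x hx => (key x hx).continuousAt.continuousWithinAt)
    (fun x hx => (key x (Ico_subset_Icc_self hx)).hasDerivWithinAt) b (right_mem_Icc.2 hab.le)
  linarith
end

section
/- Fix d ≥ 1 and write ℝ^d for EuclideanSpace ℝ (Fin d), with Euclidean inner product ⟪·,·⟫. Let ε > 0, f, S : ℝ^d → ℝ^d and p : ℝ^d → ℝ be C¹, a < b reals, and let w, z : ℝ → ℝ^d be C² on [a,b] satisfying on [a,b] the viscous primal equation (f∘w)' + S(w) = ε·w'' and the viscous adjoint equation −(Df(w))*·z' + (DS(w))*·z = ε·z'' + ∇p(w). If M ≥ 0 is such that ‖z'(a)‖ ≤ M, ‖z'(b)‖ ≤ M, ‖w'(a)‖ ≤ M, ‖w'(b)‖ ≤ M, then | ( p(w(b)) − ⟪z(b),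 S(w(b))⟫ ) − ( p(w(a)) − ⟪z(a), S(w(a))⟫ ) | ≤ 2·ε·M². -/
open Set
open scoped RealInnerProductSpace

/-- Quantitative `O(ε)` bound in Theorem 2: if the gradients of `w^ε` and `z^ε`
at the endpoints of the transition region `[a,b]` are bounded by `M`, then the
smooth jump `[p(w^ε)] - [⟪z^ε, S(w^ε)⟫]` is bounded by `2·ε·M²`. -/
theorem viscous_interior_bc_eps_bound
    (d : ℕ) (hd : 1 ≤ d) (ε : ℝ) (hε : 0 < ε)
    (f S : EuclideanSpace ℝ (Fin d) → EuclideanSpace ℝ (Fin d))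
    (hf : ContDiff ℝ 1 f) (hS : ContDiff ℝ 1 S)
    (p : EuclideanSpace ℝ (Fin d) → ℝ) (hp : ContDiff ℝ 1 p)
    (a b : ℝ) (hab : a < b)
    (w z w' w'' z' z'' : ℝ → EuclideanSpace ℝ (Fin d))
    -- w and z are C² on [a,b]
    (hw' : ∀ x ∈ Icc a b, HasDerivAt w (w' x) x)
    (hw'' : ∀ x ∈ Icc a b, HasDerivAt w' (w'' x) x)
    (hz' : ∀ x ∈ Icc a b, HasDerivAt z (z' x) x)
    (hz'' : ∀ x ∈ Icc a b, HasDerivAt z' (z'' x) x)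
    (hw''c : ContinuousOn w'' (Icc a b)) (hz''c : ContinuousOn z'' (Icc a b))
    -- viscous primal equation
    (hprimal : ∀ x ∈ Icc a b, deriv (f ∘ w) x + S (w x) = ε • w'' x)
    -- viscous adjoint equation
    (hadj : ∀ x ∈ Icc a b,
      -(ContinuousLinearMap.adjoint (fderiv ℝ f (w x))) (z' x)
        + (ContinuousLinearMap.adjoint (fderiv ℝ S (w x))) (z x)
        = ε • z'' x + gradient p (w x))
    -- endpoint gradient bounds
    (M : ℝ) (hM : 0 ≤ M)
    (hza : ‖z' a‖ ≤ M) (hzb : ‖z' b‖ ≤ M)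
    (hwa : ‖w' a‖ ≤ M) (hwb : ‖w' b‖ ≤ M) :
    |(p (w b) - ⟪z b, S (w b)⟫) - (p (w a) - ⟪z a, S (w a)⟫)| ≤ 2 * ε * M ^ 2 := by
  have key : ∀ x ∈ Icc a b, HasDerivAt
      (fun x => (p (w x) - ⟪z x, S (w x)⟫) + ε * ⟪z' x, w' x⟫) 0 x := by
    intro x hx
    have hfd : HasFDerivAt f (fderiv ℝ f (w x)) (w x) :=
      (hf.differentiable one_ne_zero (w x)).hasFDerivAt
    have hSd : HasFDerivAt S (fderiv ℝ S (w x)) (w x) :=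
      (hS.differentiable one_ne_zero (w x)).hasFDerivAt
    have hpd : HasFDerivAt p (fderiv ℝ p (w x)) (w x) :=
      (hp.differentiable one_ne_zero (w x)).hasFDerivAt
    have h1 := hfd.comp_hasDerivAt x (hw' x hx)
    have h2 := hSd.comp_hasDerivAt x (hw' x hx)
    have h3 := hpd.comp_hasDerivAt x (hw' x hx)
    have h4 := (hz' x hx).inner ℝ h2
    have h5 := ((hz'' x hx).inner ℝ (hw'' x hx)).const_mul ε
    have h6 := (h3.sub h4).add h5
    have e1 := congrArg (fun v => ⟪z' x, v⟫) (hprimal x hx)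
    have e2 := congrArg (fun v => ⟪v, w' x⟫) (hadj x hx)
    have hg : ⟪gradient p (w x), w' x⟫ = fderiv ℝ p (w x) (w' x) := by
      simp [gradient]
    rw [h1.deriv] at e1
    simp only [inner_add_left, inner_add_right, inner_neg_left, inner_smul_left,
      inner_smul_right, ContinuousLinearMap.adjoint_inner_left, hg, conj_trivial] at e1 e2
    refine h6.congr_deriv ?_
    simp only [Function.comp_apply]
    linarith
  have hconst := constant_of_has_deriv_right_zero
    (fun x hx => (key x hx).continuousAt.continuousWithinAt)
    (fun x hx => (key x (Ico_subset_Icc_self hx)).hasDerivWithinAt) b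
    (right_mem_Icc.2 hab.le)
  have ha : |⟪z' a, w' a⟫| ≤ M * M :=
    (abs_real_inner_le_norm _ _).trans (mul_le_mul hza hwa (norm_nonneg _) hM)
  have hb : |⟪z' b, w' b⟫| ≤ M * M :=
    (abs_real_inner_le_norm _ _).trans (mul_le_mul hzb hwb (norm_nonneg _) hM)
  rw [abs_le] at ha hb
  have a1 := mul_le_mul_of_nonneg_left ha.1 hε.le
  have a2 := mul_le_mul_of_nonneg_left ha.2 hε.le
  have b1 := mul_le_mul_of_nonneg_left hb.1 hε.le
  have b2 := mul_le_mul_of_nonneg_left hb.2 hε.le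
  rw [abs_le]
  constructor <;> linarith
end

section
/- Fix d ≥ 1 and write ℝ^d for EuclideanSpace ℝ (Fin d), with Euclidean inner product ⟪·,·⟫. Let f, S : ℝ^d → ℝ^d and p : ℝ^d → ℝ be C¹ and M ≥ 0. Suppose that for every ε in some interval (0, ε₀) we are given reals a_ε < b_ε and functions w_ε, z_ε : ℝ → ℝ^d that are C² on [a_ε, b_ε], satisfy on [a_ε, b_ε] the viscous primal equation (f∘w_ε)' + S(w_ε) = ε·w_ε'' and the viscous adjoint equation −(Df(w_ε))*·z_ε' + (DS(w_ε))*·z_ε = ε·z_ε'' + ∇p(w_ε), and satisfy the uniform endpoint gradient bounds ‖z_ε'(a_ε)‖ ≤ M, ‖z_ε'(b_ε)‖ ≤ M, ‖w_ε'(a_ε)‖ ≤ M, ‖w_ε'(b_ε)‖ ≤ M. Then lim_{ε→0⁺} [ ( p(w_ε(b_ε)) − ⟪z_ε(b_ε), S(w_ε(b_ε))⟫ ) − ( p(w_ε(a_ε)) − ⟪z_ε(a_ε), S(w_ε(a_ε))⟫ ) ] = 0. -/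
open Set Filter
open scoped Topology RealInnerProductSpace

/-- Theorem 2 (convergence of the interior boundary condition): for a family of
viscous primal solutions `w_ε` and viscous adjoint solutions `z_ε` on transition
regions `[a_ε, b_ε]` with uniformly bounded endpoint gradients, the smooth jump
`[p(w_ε)] - [⟪z_ε, S(w_ε)⟫]` across the transition region tends to `0` as
`ε → 0⁺`. -/
theorem interior_boundary_condition_convergence
    (d : ℕ) (hd : 1 ≤ d)
    (f S : EuclideanSpace ℝ (Fin d) → EuclideanSpace ℝ (Fin d))
    (hf : ContDiff ℝ 1 f) (hS : ContDiff ℝ 1 S)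
    (p : EuclideanSpace ℝ (Fin d) → ℝ) (hp : ContDiff ℝ 1 p)
    (M : ℝ) (hM : 0 ≤ M) (ε₀ : ℝ) (hε₀ : 0 < ε₀)
    (a b : ℝ → ℝ) (w z w' w'' z' z'' : ℝ → ℝ → EuclideanSpace ℝ (Fin d))
    (hab : ∀ ε ∈ Ioo (0:ℝ) ε₀, a ε < b ε)
    -- w_ε and z_ε are C² on [a_ε, b_ε]
    (hw' : ∀ ε ∈ Ioo (0:ℝ) ε₀, ∀ x ∈ Icc (a ε) (b ε), HasDerivAt (w ε) (w' ε x) x)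
    (hw'' : ∀ ε ∈ Ioo (0:ℝ) ε₀, ∀ x ∈ Icc (a ε) (b ε), HasDerivAt (w' ε) (w'' ε x) x)
    (hz' : ∀ ε ∈ Ioo (0:ℝ) ε₀, ∀ x ∈ Icc (a ε) (b ε), HasDerivAt (z ε) (z' ε x) x)
    (hz'' : ∀ ε ∈ Ioo (0:ℝ) ε₀, ∀ x ∈ Icc (a ε) (b ε), HasDerivAt (z' ε) (z'' ε x) x)
    (hw''c : ∀ ε ∈ Ioo (0:ℝ) ε₀, ContinuousOn (w'' ε) (Icc (a ε) (b ε)))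
    (hz''c : ∀ ε ∈ Ioo (0:ℝ) ε₀, ContinuousOn (z'' ε) (Icc (a ε) (b ε)))
    -- viscous primal equation
    (hprimal : ∀ ε ∈ Ioo (0:ℝ) ε₀, ∀ x ∈ Icc (a ε) (b ε),
      deriv (f ∘ w ε) x + S (w ε x) = ε • w'' ε x)
    -- viscous adjoint equation
    (hadj : ∀ ε ∈ Ioo (0:ℝ) ε₀, ∀ x ∈ Icc (a ε) (b ε),
      -(ContinuousLinearMap.adjoint (fderiv ℝ f (w ε x))) (z' ε x)
        + (ContinuousLinearMap.adjoint (fderiv ℝ S (w ε x))) (z ε x)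
        = ε • z'' ε x + gradient p (w ε x))
    -- uniform endpoint gradient bounds
    (hbound : ∀ ε ∈ Ioo (0:ℝ) ε₀,
      ‖z' ε (a ε)‖ ≤ M ∧ ‖z' ε (b ε)‖ ≤ M ∧ ‖w' ε (a ε)‖ ≤ M ∧ ‖w' ε (b ε)‖ ≤ M) :
    Tendsto (fun ε =>
        (p (w ε (b ε)) - ⟪z ε (b ε), S (w ε (b ε))⟫)
          - (p (w ε (a ε)) - ⟪z ε (a ε), S (w ε (a ε))⟫))
      (𝓝[>] (0:ℝ)) (𝓝 0) := by
  have key : ∀ ε ∈ Ioo (0:ℝ) ε₀,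
      ‖(p (w ε (b ε)) - ⟪z ε (b ε), S (w ε (b ε))⟫)
          - (p (w ε (a ε)) - ⟪z ε (a ε), S (w ε (a ε))⟫)‖ ≤ ε * (2 * (M * M)) := by
    intro ε hε
    have hder : ∀ x ∈ Icc (a ε) (b ε),
        HasDerivAt (fun x => (p (w ε x) - ⟪z ε x, S (w ε x)⟫) + ε * ⟪z' ε x, w' ε x⟫) 0 x := by
      intro x hx
      have h1 := hw' ε hε x hx
      have h2 := hw'' ε hε x hx
      have h3 := hz' ε hε x hx
      have h4 := hz'' ε hε x hx
      have dp : HasGradientAt p (gradient p (w ε x)) (w ε x) :=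
        ((hp.differentiable one_ne_zero) (w ε x)).hasGradientAt
      have dS := ((hS.differentiable one_ne_zero) (w ε x)).hasFDerivAt
      have df := ((hf.differentiable one_ne_zero) (w ε x)).hasFDerivAt
      have hP := dp.hasFDerivAt.comp_hasDerivAt x h1
      have hSS := dS.comp_hasDerivAt x h1
      have hF := (df.comp_hasDerivAt x h1).deriv
      have e1 := hprimal ε hε x hx
      rw [hF] at e1
      have e2 := congrArg (fun v => ⟪v, w' ε x⟫) (hadj ε hε x hx)
      have e3 := congrArg (fun v => ⟪z' ε x, v⟫) e1
      simp only [inner_add_left, inner_add_right, inner_neg_left,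
        ContinuousLinearMap.adjoint_inner_left, real_inner_smul_left, real_inner_smul_right]
        at e2 e3
      have hG := (hP.sub (h3.inner ℝ hSS)).add ((h4.inner ℝ h2).const_mul ε)
      refine hG.congr_deriv ?_
      simp only [InnerProductSpace.toDual_apply_apply, Function.comp]
      linarith
    have hc := constant_of_has_deriv_right_zero
      (fun x hx => (hder x hx).continuousAt.continuousWithinAt)
      (fun x hx => (hder x (Ico_subset_Icc_self hx)).hasDerivWithinAt)
      (b ε) (right_mem_Icc.2 (hab ε hε).le)
    obtain ⟨b1, b2, b3, b4⟩ := hbound ε hε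
    have i1 : |⟪z' ε (a ε), w' ε (a ε)⟫| ≤ M * M :=
      (abs_real_inner_le_norm _ _).trans (mul_le_mul b1 b3 (norm_nonneg _) hM)
    have i2 : |⟪z' ε (b ε), w' ε (b ε)⟫| ≤ M * M :=
      (abs_real_inner_le_norm _ _).trans (mul_le_mul b2 b4 (norm_nonneg _) hM)
    have e : (p (w ε (b ε)) - ⟪z ε (b ε), S (w ε (b ε))⟫)
          - (p (w ε (a ε)) - ⟪z ε (a ε), S (w ε (a ε))⟫)
        = ε * (⟪z' ε (a ε), w' ε (a ε)⟫ - ⟪z' ε (b ε), w' ε (b ε)⟫) := by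
      linarith
    rw [e, Real.norm_eq_abs, abs_mul, abs_of_pos hε.1]
    refine mul_le_mul_of_nonneg_left ?_ hε.1.le
    rw [abs_le] at *
    constructor <;> linarith [i1.1, i1.2, i2.1, i2.2]
  refine squeeze_zero_norm' (a := fun ε => ε * (2 * (M * M))) ?_ ?_
  · filter_upwards [Ioo_mem_nhdsGT hε₀] with ε hε using key ε hε
  · have : Tendsto (fun ε : ℝ => ε * (2 * (M * M))) (𝓝 0) (𝓝 (0 * (2 * (M * M)))) :=
      tendsto_id.mul_const _
    rw [zero_mul] at this
    exact this.mono_left nhdsWithin_le_nhds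
end

section
/- Fix γ > 1 and reals A > 0, A' ≠ 0. For a state (ρ, m, E) ∈ ℝ³ with ρ > 0 define the pressure P(ρ,m,E) := (γ−1)·(E − m²/(2ρ)), the Euler flux f(ρ,m,E) := ( m, m²/ρ + P, (m/ρ)(E + P) ), and the nozzle source term S(ρ,m,E) := (A'/A)·( m, m²/ρ, (m/ρ)(E + P) ). Let w₋ = (ρ₋, m₋, E₋) and w₊ = (ρ₊, m₊, E₊) be states with ρ₋ > 0, ρ₊ > 0 satisfying the Rankine–Hugoniot condition f(w₊) = f(w₋), and assume the pressure jump [P] := P(w₊) − P(w₋) is nonzero. Let z = (z₁, z₂, z₃) ∈ ℝ³ satisfy the interior boundary condition z · ( −(S(w₊) − S(w₋)) ) = −[P] (dot denoting the Euclidean inner product on ℝ³). Then z₂ = −A/A'. -/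
/-- Pressure of a polytropic ideal gas, in conservative variables `(ρ, m, E)`. -/
noncomputable def eulerPressure (γ : ℝ) (w : ℝ × ℝ × ℝ) : ℝ :=
  (γ - 1) * (w.2.2 - w.2.1 ^ 2 / (2 * w.1))

/-- Flux of the one-dimensional Euler equations in conservative variables. -/
noncomputable def eulerFlux (γ : ℝ) (w : ℝ × ℝ × ℝ) : ℝ × ℝ × ℝ :=
  (w.2.1,
   w.2.1 ^ 2 / w.1 + eulerPressure γ w,
   (w.2.1 / w.1) * (w.2.2 + eulerPressure γ w))

/-- Source term of the quasi one-dimensional Euler equations for nozzle flow,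
with nozzle cross-section `A` and derivative `A'` at the shock location. -/
noncomputable def nozzleSource (γ A A' : ℝ) (w : ℝ × ℝ × ℝ) : ℝ × ℝ × ℝ :=
  (A' / A) • (w.2.1, w.2.1 ^ 2 / w.1, (w.2.1 / w.1) * (w.2.2 + eulerPressure γ w))

/-- The internal adjoint boundary condition for the quasi one-dimensional Euler
equations forces `z₂ = -A/A'`: if the states satisfy Rankine–Hugoniot with a
nonzero pressure jump and `z` satisfies the interior boundary condition
`zᵀ[f(w)_x] = -[p(w)]` (with `[f(w)_x] = -[S(w)]`), then `z₂ = -A/A'`. -/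
theorem euler_internal_adjoint_boundary_condition
    (γ A A' : ℝ) (hγ : 1 < γ) (hA : 0 < A) (hA' : A' ≠ 0)
    (ρm mm Em ρp mp Ep : ℝ) (hρm : 0 < ρm) (hρp : 0 < ρp)
    (hRH : eulerFlux γ (ρp, mp, Ep) = eulerFlux γ (ρm, mm, Em))
    (hPjump : eulerPressure γ (ρp, mp, Ep) - eulerPressure γ (ρm, mm, Em) ≠ 0)
    (z₁ z₂ z₃ : ℝ)
    (hibc :
      z₁ * (-(nozzleSource γ A A' (ρp, mp, Ep)
            - nozzleSource γ A A' (ρm, mm, Em)).1)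
        + z₂ * (-(nozzleSource γ A A' (ρp, mp, Ep)
            - nozzleSource γ A A' (ρm, mm, Em)).2.1)
        + z₃ * (-(nozzleSource γ A A' (ρp, mp, Ep)
            - nozzleSource γ A A' (ρm, mm, Em)).2.2)
      = -(eulerPressure γ (ρp, mp, Ep) - eulerPressure γ (ρm, mm, Em))) :
    z₂ = -A / A' := by
  simp only [eulerFlux, Prod.mk.injEq] at hRH
  obtain ⟨h1, h2, h3⟩ := hRH
  simp only [nozzleSource, Prod.smul_mk, Prod.mk_sub_mk, smul_eq_mul] at hibc
  subst h1
  rw [h3] at hibc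
  generalize eulerPressure γ (ρp, mp, Ep) = Pp at *
  generalize eulerPressure γ (ρm, mp, Em) = Pm at *
  have hj : mp ^ 2 / ρp - mp ^ 2 / ρm = -(Pp - Pm) := by linarith
  have key : (z₂ * (A' / A) + 1) * (Pp - Pm) = 0 := by
    linear_combination hibc + z₂ * (A' / A) * hj
  have h4 : z₂ * (A' / A) + 1 = 0 := (mul_eq_zero.mp key).resolve_right hPjump
  have hA0 : A ≠ 0 := hA.ne'
  field_simp at h4 ⊢
  linarith
end
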